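/- arXiv:1210.2379 — 2 statements merged into one kernel-verified Lean document; each statement's English description precedes it below -/
import Mathlib

section
/- Let d ≥ 1, let Ω be a bounded open subset of ℝ^d, and let X be a reflexive real Banach space with a normalized 1-symmetric basis (e_n). Then no sequence (f_n) in L¹(Ω) is equivalent to the unit vector basis of ℓ¹ with respect to the norm ‖·‖_{JF_X(Ω)}: there exist no constants 0 < c ≤ C such that c·Σ_n |a_n| ≤ ‖Σ_n a_n f_n‖_{JF_X(Ω)} ≤ C·Σ_n |a_n| for every finitely supported scalar sequence (a_n). Consequently ℓ¹ does not embed isomorphically into the completion JF_X(Ω). -/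
/-! Suppose that `(f n)` is equivalent to the unit vector basis of `ℓ¹` in the `JF` norm.

*Selection.* Fix `ε > 0` and a coordinate direction. Thin slabs around distinct parallel hyperplanes
are disjoint, so if infinitely many hyperplanes had boxes of integral larger than `ε` in arbitrarily
thin slabs around them (along a subsequence), the `JF` norms would dominate the norms of
arbitrarily long sums of basis vectors with coefficients at least `ε`. As `X` is reflexive, its
basis is not equivalent to that of `c₀`, and these norms are unbounded (`exists_large`). A diagonal
argument therefore leaves only countably many exceptional hyperplanes, and moving the faces of
boxes to a countable dense set of coordinates gives a subsequence with convergent integrals over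
every box in `Ω` (`exists_subseq_cauchy`).

*Norming functionals.* The `JF` norm is attained, up to `ε`, by the functionals
`f ↦ ∑ j, a j * ∫ x in T j, f x`, with `a` in the dual unit ball of `X` and disjoint boxes `T j`.
By symmetry of the basis, `|a j|` may be assumed decreasing. With this normalization the
parameters `(a, T)` form a compact set for the product topology, degenerate boxes being allowed, and
each functional value depends continuously on the parameters (`continuous_pairing`), by Dini's
theorem.

*Conclusion.* The differences `h k = f (s (2 k)) - f (s (2 k + 1))` of a selected subsequence are
bounded in the `JF` norm and their integrals over each box tend to zero. The basis of the
reflexive space `X` is shrinking, so they tend to zero against every norming functional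
(`tendsto_pairing`). They thus give a bounded, pointwise null sequence of continuous functions on a
compact space, and Hahn–Banach, Riesz–Markov and dominated convergence (Mazur's theorem in `C(K)`)
give a convex combination of small `JF` norm (`exists_convex_comb_lt`). Written in terms of the
`f n`, its coefficients have `ℓ¹` norm two, which contradicts the lower `ℓ¹` estimate.
-/

open MeasureTheory

noncomputable section

/-- `e` is a normalized 1-symmetric (Schauder) basis of `X`: each `e n` has norm one,
its linear span is dense, and the norm of finite linear combinations is invariant under
permutations of the indices and changes of signs of the coefficients. -/
def IsSymmetricBasis {X : Type*} [NormedAddCommGroup X] [NormedSpace ℝ X] (e : ℕ → X) : Prop :=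
  (∀ n, ‖e n‖ = 1) ∧
  Dense (Submodule.span ℝ (Set.range e) : Set X) ∧
  ∀ (a : ℕ →₀ ℝ) (π : Equiv.Perm ℕ) (ε : ℕ → ℝ), (∀ n, ε n = 1 ∨ ε n = -1) →
    ‖a.sum fun n c => (ε n * c) • e (π n)‖ = ‖a.sum fun n c => c • e n‖

/-- An open parallelepiped in `ℝ^d`, i.e. a product of open intervals. -/
def IsOpenParallelepiped {d : ℕ} (T : Set (Fin d → ℝ)) : Prop :=
  ∃ a b : Fin d → ℝ, (∀ i, a i < b i) ∧ T = Set.pi Set.univ fun i => Set.Ioo (a i) (b i)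

/-- The `JF_X(Ω)` norm of an integrable function on `Ω ⊆ ℝ^d`: the supremum of
`‖Σ_j (∫_{T_j} f dμ) e_j‖_X` over all finite families of pairwise disjoint open
parallelepipeds contained in `Ω`. -/
def JFNorm {X : Type*} [NormedAddCommGroup X] [NormedSpace ℝ X] {d : ℕ}
    (e : ℕ → X) (Ω : Set (Fin d → ℝ)) (f : (Fin d → ℝ) → ℝ) : ℝ :=
  sSup { r | ∃ (m : ℕ) (T : Fin m → Set (Fin d → ℝ)),
    (∀ j, IsOpenParallelepiped (T j) ∧ T j ⊆ Ω) ∧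
    (Pairwise fun i j => Disjoint (T i) (T j)) ∧
    r = ‖∑ j : Fin m, (∫ x in T j, f x) • e (j : ℕ)‖ }

open Filter Topology

/-! ### Convex combinations in C(K) -/

/-- A uniformly bounded, pointwise null sequence in `C(K)` has convex combinations of the absolute
values that are uniformly small. Otherwise Hahn–Banach separates those combinations from
`{u | u < c}` by a functional, necessarily positive; by Riesz–Markov it is integration against a
finite measure, and dominated convergence contradicts the separation. -/
theorem exists_convex_comb_lt {K : Type*} [TopologicalSpace K] [CompactSpace K] [T2Space K]
    (H : ℕ → C(K, ℝ)) (M : ℝ) (hM : ∀ n x, |H n x| ≤ M)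
    (h0 : ∀ x, Tendsto (fun n => H n x) atTop (𝓝 0)) {c : ℝ} (hc : 0 < c) :
    ∃ a : ℕ →₀ ℝ, (∀ n, 0 ≤ a n) ∧ (a.sum fun _ t => t) = 1 ∧
      ∀ x, (a.sum fun n t => t * |H n x|) < c := by
  classical
  by_contra! hcon
  let _ : MeasurableSpace K := borel K
  have : BorelSpace K := ⟨rfl⟩
  set L : (ℕ →₀ ℝ) →ₗ[ℝ] C(K, ℝ) := Finsupp.linearCombination ℝ (fun n => |H n|) with hL
  set S : Set (ℕ →₀ ℝ) := {a | (∀ n, 0 ≤ a n) ∧ (a.sum fun _ t => t) = 1} with hS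
  have hSc : Convex ℝ S := by
    intro a ha b hb p q hp hq hpq
    refine ⟨fun n => ?_, ?_⟩
    · have := ha.1 n
      have := hb.1 n
      simp only [Finsupp.add_apply, Finsupp.smul_apply, smul_eq_mul]
      positivity
    · have e1 : ∀ a : ℕ →₀ ℝ, (a.sum fun _ t => t)
          = Finsupp.linearCombination ℝ (fun _ : ℕ => (1 : ℝ)) a := by
        intro a
        simp [Finsupp.linearCombination_apply]
      have h1 := ha.2
      have h2 := hb.2
      rw [e1] at h1 h2 ⊢
      rw [map_add, map_smul, map_smul, h1, h2]
      simpa using hpq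
  set O : Set C(K, ℝ) := {u | ∀ x, u x < c} with hO
  have hOo : IsOpen O := by
    have := ContinuousMap.isOpen_setOfPred_mapsTo (X := K) (Y := ℝ) isCompact_univ
      (isOpen_Iio (a := c))
    convert this using 1
    ext u
    simp [hO, Set.MapsTo]
  have hOc : Convex ℝ O := by
    intro u hu v hv p q hp hq hpq x
    have h1 := hu x
    have h2 := hv x
    simp only [ContinuousMap.add_apply, ContinuousMap.smul_apply, smul_eq_mul]
    rcases hp.eq_or_lt with rfl | hp'
    · have : q = 1 := by linarith
      subst this; linarith
    · nlinarith
  have hLapp : ∀ a x, L a x = a.sum fun n t => t * |H n x| := by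
    intro a x
    rw [hL, Finsupp.linearCombination_apply, Finsupp.sum, Finsupp.sum, ContinuousMap.sum_apply]
    rfl
  have hdisj : Disjoint O (L '' S) := by
    rw [Set.disjoint_left]
    rintro _ hu ⟨a, ha, rfl⟩
    obtain ⟨x, hx⟩ := hcon a ha.1 ha.2
    have := hu x
    rw [hLapp] at this
    linarith
  obtain ⟨Λ, u, hΛ1, hΛ2⟩ := geometric_hahn_banach_open hOc hOo (hSc.linear_image L) hdisj
  have hu : 0 < u := by
    have : Λ 0 < u := hΛ1 0 (by intro x; simpa using hc)
    simpa using this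
  have hpos : ∀ w : C(K, ℝ), 0 ≤ w → 0 ≤ Λ w := by
    intro w hw
    by_contra! hneg
    -- a large negative multiple of `w` stays in `O` but violates the separation
    have hm : (u / Λ w) • w ∈ O := by
      intro x
      have : u / Λ w * w x ≤ 0 :=
        mul_nonpos_of_nonpos_of_nonneg (div_nonpos_of_nonneg_of_nonpos hu.le hneg.le) (hw x)
      simp only [ContinuousMap.smul_apply, smul_eq_mul]
      linarith
    have := hΛ1 _ hm
    rw [map_smul, smul_eq_mul, div_mul_cancel₀ _ hneg.ne] at this
    exact lt_irrefl _ this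
  have hΛH : ∀ n, u ≤ Λ |H n| := by
    intro n
    refine hΛ2 _ ⟨Finsupp.single n 1, ⟨fun m => ?_, ?_⟩, ?_⟩
    · by_cases h : n = m <;> simp [h]
    · simp
    · simp [hL]
  let Λ' : CompactlySupportedContinuousMap K ℝ →ₗ[ℝ] ℝ :=
    { toFun := fun f => Λ f.toContinuousMap
      map_add' := fun f g => by
        rw [← map_add]; rfl
      map_smul' := fun r f => by
        rw [RingHom.id_apply, ← map_smul]; rfl }
  let P : CompactlySupportedContinuousMap K ℝ →ₚ[ℝ] ℝ :=
    PositiveLinearMap.mk₀ Λ' (fun f hf => hpos _ hf)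
  have hint : ∀ g : C(K, ℝ), ∫ x, g x ∂(RealRMK.rieszMeasure P) = Λ g := by
    intro g
    exact RealRMK.integral_rieszMeasure P (CompactlySupportedContinuousMap.continuousMapEquiv g)
  have hlim : Tendsto (fun n => ∫ x, |H n| x ∂(RealRMK.rieszMeasure P)) atTop
      (𝓝 (∫ x, (0 : ℝ) ∂(RealRMK.rieszMeasure P))) := by
    refine tendsto_integral_of_dominated_convergence (fun _ => M) ?_ ?_ ?_ ?_
    · intro n
      exact (|H n|).continuous.aestronglyMeasurable
    · exact integrable_const _
    · intro n
      filter_upwards with x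
      simpa using hM n x
    · filter_upwards with x
      simpa using (h0 x).abs
  simp only [hint, integral_zero] at hlim
  exact absurd (ge_of_tendsto' hlim hΛH) (not_le.2 hu)

/-! ### The dual ball of a symmetric basis -/

section Geometry

variable {X : Type*} [NormedAddCommGroup X] [NormedSpace ℝ X] {e : ℕ → X}

/-- The sequences `a` of values `a n = φ (e n)` of the functionals `φ` in the unit ball of `X*`,
described by testing on finite linear combinations only; in this form the set is visibly closed for
pointwise convergence. -/
def dualBall (e : ℕ → X) : Set (ℕ → ℝ) :=
  {a | ∀ (F : Finset ℕ) (c : ℕ → ℝ), |∑ j ∈ F, a j * c j| ≤ ‖∑ j ∈ F, c j • e j‖}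

theorem IsSymmetricBasis.norm_sum_perm_sign (he : IsSymmetricBasis e) (F : Finset ℕ) (c : ℕ → ℝ)
    (π : Equiv.Perm ℕ) (ε : ℕ → ℝ) (hε : ∀ n, ε n = 1 ∨ ε n = -1) :
    ‖∑ j ∈ F, (ε j * c j) • e (π j)‖ = ‖∑ j ∈ F, c j • e j‖ := by
  classical
  have h := he.2.2 (Finsupp.onFinset F (fun j => if j ∈ F then c j else 0)
    (fun j hj => by by_contra h; simp [h] at hj)) π ε hε
  rw [Finsupp.onFinset_sum _ (by simp), Finsupp.onFinset_sum _ (by simp)] at h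
  refine (Eq.trans ?_ h).trans ?_ <;> congr 1 <;>
    exact Finset.sum_congr rfl fun j hj => by simp [hj]

theorem IsSymmetricBasis.norm_sum_perm (he : IsSymmetricBasis e) (F : Finset ℕ) (c : ℕ → ℝ)
    (π : Equiv.Perm ℕ) : ‖∑ j ∈ F, c j • e (π j)‖ = ‖∑ j ∈ F, c j • e j‖ := by
  simpa using he.norm_sum_perm_sign F c π (fun _ => 1) (fun _ => Or.inl rfl)

/-- The symmetric basis is 1-unconditional: dropping terms does not increase the norm. -/
theorem IsSymmetricBasis.norm_sum_mono (he : IsSymmetricBasis e) {G F : Finset ℕ} (hGF : G ⊆ F)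
    (c : ℕ → ℝ) : ‖∑ j ∈ G, c j • e j‖ ≤ ‖∑ j ∈ F, c j • e j‖ := by
  classical
  -- the sum over `G` is the average of the sum over `F` and of its reflection off `G`
  have h := he.norm_sum_perm_sign F c 1 (fun j => if j ∈ G then 1 else -1)
    (fun j => by by_cases hj : j ∈ G <;> simp [hj])
  have e1 : ∑ j ∈ G, c j • e j = (2⁻¹ : ℝ) • (∑ j ∈ F, c j • e j
      + ∑ j ∈ F, ((if j ∈ G then (1 : ℝ) else -1) * c j) • e ((1 : Equiv.Perm ℕ) j)) := by
    rw [← Finset.sum_add_distrib, Finset.smul_sum, ← Finset.sum_subset hGF]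
    · refine Finset.sum_congr rfl fun j hj => ?_
      simp only [hj, if_true, one_mul, Equiv.Perm.coe_one, id]
      rw [← two_smul ℝ (c j • e j), smul_smul]
      norm_num
    · intro j _ hj
      simp [hj]
  rw [e1, norm_smul]
  have h2 := norm_add_le (∑ j ∈ F, c j • e j)
    (∑ j ∈ F, ((if j ∈ G then (1 : ℝ) else -1) * c j) • e ((1 : Equiv.Perm ℕ) j))
  rw [h] at h2
  have : ‖(2⁻¹ : ℝ)‖ = 2⁻¹ := by norm_num
  rw [this]
  linarith

/-- An injection of `{0, …, m - 1}` into `ℕ` extends to a permutation of `ℕ`. -/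
theorem exists_perm_extending {m : ℕ} (ι : Fin m ↪ ℕ) : ∃ π : Equiv.Perm ℕ, ∀ j : Fin m,
    π j = ι j := by
  have := Equiv.Perm.isMultiplyPretransitive ℕ m
  obtain ⟨g, hg⟩ := (MulAction.isMultiplyPretransitive_iff (G := Equiv.Perm ℕ) (α := ℕ)).1 this
    Fin.valEmbedding ι
  exact ⟨g, fun j => by rw [← hg]; rfl⟩

theorem IsSymmetricBasis.norm_sum_emb (he : IsSymmetricBasis e) {m : ℕ} (ι : Fin m ↪ ℕ)
    (c : Fin m → ℝ) : ‖∑ j, c j • e (ι j)‖ = ‖∑ j, c j • e (j : ℕ)‖ := by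
  obtain ⟨π, hπ⟩ := exists_perm_extending ι
  have h := he.norm_sum_perm (Finset.range m) (fun j => if h : j < m then c ⟨j, h⟩ else 0) π
  rw [Finset.sum_range, Finset.sum_range] at h
  simpa [hπ] using h

/-- Over a finite set the norm of a linear combination does not depend on which distinct basis
vectors are used. -/
theorem IsSymmetricBasis.norm_sum_finset (he : IsSymmetricBasis e) (F : Finset ℕ) (c : ℕ → ℝ) :
    ‖∑ j ∈ F, c j • e j‖ =
      ‖∑ j : Fin F.card, c (F.equivFin.symm j : ℕ) • e (j : ℕ)‖ := by
  rw [← he.norm_sum_emb (F.equivFin.symm.toEmbedding.trans (Function.Embedding.subtype _))]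
  rw [← Finset.sum_coe_sort F, ← Equiv.sum_comp F.equivFin.symm]
  rfl

theorem IsSymmetricBasis.single_mem_dualBall (he : IsSymmetricBasis e) (n : ℕ) :
    (fun m => if m = n then (1 : ℝ) else 0) ∈ dualBall e := by
  classical
  intro F c
  by_cases hn : n ∈ F
  · have := he.norm_sum_mono (Finset.singleton_subset_iff.2 hn) c
    rw [Finset.sum_singleton, norm_smul, he.1, mul_one] at this
    simpa [hn] using this
  · simp [hn]

theorem comp_mem_dualBall (φ : X →L[ℝ] ℝ) (hφ : ∀ x, |φ x| ≤ ‖x‖) :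
    (fun n => φ (e n)) ∈ dualBall e := by
  intro F c
  have := hφ (∑ j ∈ F, c j • e j)
  simpa [map_sum, mul_comm] using this

theorem IsSymmetricBasis.trunc_mem_dualBall (he : IsSymmetricBasis e) {a : ℕ → ℝ}
    (ha : a ∈ dualBall e) (G : Finset ℕ) : (fun n => if n ∈ G then a n else 0) ∈ dualBall e := by
  classical
  intro F c
  refine le_trans (le_of_eq ?_) ((ha (F ∩ G) c).trans
    (he.norm_sum_mono Finset.inter_subset_left c))
  simp [ite_mul]

theorem IsSymmetricBasis.perm_mem_dualBall (he : IsSymmetricBasis e) {a : ℕ → ℝ}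
    (ha : a ∈ dualBall e) (π : Equiv.Perm ℕ) : (fun n => a (π n)) ∈ dualBall e := by
  intro F c
  have h := ha (F.map π.toEmbedding) (fun i => c (π.symm i))
  simp only [Finset.sum_map, Equiv.coe_toEmbedding, Equiv.symm_apply_apply] at h
  rwa [he.norm_sum_perm] at h

theorem isClosed_dualBall : IsClosed (dualBall e) := by
  have : dualBall e = ⋂ (F : Finset ℕ) (c : ℕ → ℝ),
      {a | |∑ j ∈ F, a j * c j| ≤ ‖∑ j ∈ F, c j • e j‖} := by
    ext a; simp [dualBall]
  rw [this]
  refine isClosed_iInter fun F => isClosed_iInter fun c => isClosed_le ?_ continuous_const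
  fun_prop

theorem IsSymmetricBasis.abs_le_one (he : IsSymmetricBasis e) {a : ℕ → ℝ} (ha : a ∈ dualBall e)
    (n : ℕ) : |a n| ≤ 1 := by
  simpa [he.1] using ha {n} (fun _ => 1)

/-- Membership in `dualBall` really means extension to a functional of norm at most one, because the
span of the basis is dense. -/
theorem IsSymmetricBasis.exists_functional (he : IsSymmetricBasis e) {a : ℕ → ℝ}
    (ha : a ∈ dualBall e) : ∃ φ : X →L[ℝ] ℝ, (∀ x, |φ x| ≤ ‖x‖) ∧ ∀ n, φ (e n) = a n := by
  have hd : DenseRange (Finsupp.linearCombination ℝ e) := by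
    have := he.2.1
    rwa [← Finsupp.range_linearCombination] at this
  have hn : ∀ x : ℕ →₀ ℝ, ‖Finsupp.linearCombination ℝ a x‖
      ≤ 1 * ‖Finsupp.linearCombination ℝ e x‖ := by
    intro x
    rw [one_mul, Finsupp.linearCombination_apply, Finsupp.linearCombination_apply, Finsupp.sum,
      Finsupp.sum, Real.norm_eq_abs]
    simpa [mul_comm] using ha x.support x
  refine ⟨(Finsupp.linearCombination ℝ a).extendOfNorm (Finsupp.linearCombination ℝ e), ?_, ?_⟩
  · intro x
    simpa using LinearMap.norm_extendOfNorm_apply_le hd 1 hn x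
  · intro n
    have := LinearMap.extendOfNorm_eq hd ⟨1, hn⟩ (Finsupp.single n 1)
    simpa using this

/-- A norming functional of a finite combination may be truncated to the support of the
combination. -/
theorem IsSymmetricBasis.exists_norming (he : IsSymmetricBasis e) (F : Finset ℕ) (c : ℕ → ℝ) :
    ∃ a ∈ dualBall e, (∀ n ∉ F, a n = 0) ∧ ∑ j ∈ F, a j * c j = ‖∑ j ∈ F, c j • e j‖ := by
  classical
  obtain ⟨φ, h1, h2⟩ := exists_dual_vector'' ℝ (∑ j ∈ F, c j • e j)
  have hφ : ∀ x, |φ x| ≤ ‖x‖ := fun x => by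
    simpa using (φ.le_opNorm x).trans (mul_le_mul_of_nonneg_right h1 (norm_nonneg x))
  refine ⟨_, he.trunc_mem_dualBall (comp_mem_dualBall φ hφ) F, fun n hn => by simp [hn], ?_⟩
  rw [map_sum] at h2
  rw [Finset.sum_congr rfl (g := fun j => φ (c j • e j)), h2]
  · rfl
  · intro j hj
    simp [hj, mul_comm]

/-- Bounded sequences in a reflexive space have weak limits along ultrafilters. -/
theorem exists_weak_limit
    (hrefl : Function.Surjective (NormedSpace.inclusionInDoubleDual ℝ X))
    (u : ℕ → X) (M : ℝ) (hu : ∀ n, ‖u n‖ ≤ M) :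
    ∃ x : X, ∀ φ : X →L[ℝ] ℝ, Tendsto (fun n => φ (u n)) (hyperfilter ℕ) (𝓝 (φ x)) := by
  have hb : ∀ φ : X →L[ℝ] ℝ, ∀ n, φ (u n) ∈ Set.Icc (-(‖φ‖ * M)) (‖φ‖ * M) := by
    intro φ n
    refine abs_le.1 ?_
    exact (φ.le_opNorm _).trans (mul_le_mul_of_nonneg_left (hu n) (norm_nonneg _))
  have hlim : ∀ φ : X →L[ℝ] ℝ, ∃ y ∈ Set.Icc (-(‖φ‖ * M)) (‖φ‖ * M),
      Tendsto (fun n => φ (u n)) (hyperfilter ℕ) (𝓝 y) := by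
    intro φ
    obtain ⟨y, hy, h⟩ := (isCompact_Icc (a := -(‖φ‖ * M)) (b := ‖φ‖ * M)).ultrafilter_le_nhds
      ((hyperfilter ℕ).map (fun n => φ (u n))) (by
        simp only [Ultrafilter.coe_map, Filter.le_principal_iff, Filter.mem_map]
        exact Filter.univ_mem' (hb φ))
    exact ⟨y, hy, h⟩
  choose y hy hyl using hlim
  let ψ : (X →L[ℝ] ℝ) →ₗ[ℝ] ℝ :=
    { toFun := y
      map_add' := fun φ₁ φ₂ => tendsto_nhds_unique (hyl (φ₁ + φ₂)) ((hyl φ₁).add (hyl φ₂))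
      map_smul' := fun r φ => tendsto_nhds_unique (hyl (r • φ)) ((hyl φ).const_mul r) }
  obtain ⟨x, hx⟩ := hrefl (ψ.mkContinuous M (fun φ => by
    rw [Real.norm_eq_abs, mul_comm, abs_le]; exact hy φ))
  refine ⟨x, fun φ => ?_⟩
  have : φ x = y φ := by
    have := congrArg (fun f => f φ) hx
    simp only [NormedSpace.dual_def, LinearMap.mkContinuous_apply] at this
    exact this
  rw [this]
  exact hyl φ

/-- The biorthogonal functionals of a symmetric basis. -/
theorem IsSymmetricBasis.exists_coords (he : IsSymmetricBasis e) :
    ∃ ψ : ℕ → X →L[ℝ] ℝ, (∀ n x, |ψ n x| ≤ ‖x‖) ∧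
      ∀ n m, ψ n (e m) = if m = n then 1 else 0 := by
  choose ψ h1 h2 using fun n => he.exists_functional (he.single_mem_dualBall n)
  exact ⟨ψ, h1, h2⟩

theorem IsSymmetricBasis.exists_approx (he : IsSymmetricBasis e) (x : X) {ε : ℝ} (hε : 0 < ε) :
    ∃ (F : Finset ℕ) (c : ℕ → ℝ), ‖x - ∑ j ∈ F, c j • e j‖ < ε := by
  obtain ⟨y, hy, hxy⟩ := Metric.dense_iff.1 he.2.1 x ε hε
  obtain ⟨a, rfl⟩ := (Finsupp.mem_span_range_iff_exists_finsupp).1 hxy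
  refine ⟨a.support, a, ?_⟩
  rw [← dist_eq_norm, dist_comm]
  exact hy

/-- The coordinates of a vector cannot all stay away from zero. -/
theorem IsSymmetricBasis.coords_tendsto (he : IsSymmetricBasis e) {ψ : ℕ → X →L[ℝ] ℝ}
    (h1 : ∀ n x, |ψ n x| ≤ ‖x‖) (h2 : ∀ n m, ψ n (e m) = if m = n then 1 else 0) (x : X)
    {ε : ℝ} (hε : 0 < ε) : ∃ n, |ψ n x| < ε := by
  obtain ⟨F, c, hF⟩ := he.exists_approx x hε
  obtain ⟨n, hn⟩ := Infinite.exists_notMem_finset F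
  refine ⟨n, ?_⟩
  have : ψ n x = ψ n (x - ∑ j ∈ F, c j • e j) := by
    rw [map_sub, map_sum, Finset.sum_eq_zero, sub_zero]
    intro j hj
    have : j ≠ n := fun h => hn (h ▸ hj)
    simp [h2, this]
  rw [this]
  exact (h1 n _).trans_lt hF

/-- The biorthogonal functionals separate points. If `x` is close to a finite combination, the
norming functional of that combination is a combination of coordinate functionals, hence kills
`x`. -/
theorem IsSymmetricBasis.eq_zero_of_coords (he : IsSymmetricBasis e) {ψ : ℕ → X →L[ℝ] ℝ}
    (h2 : ∀ n m, ψ n (e m) = if m = n then 1 else 0) {x : X} (hx : ∀ n, ψ n x = 0) : x = 0 := by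
  rw [← norm_le_zero_iff]
  refine le_of_forall_pos_le_add fun ε hε => ?_
  obtain ⟨F, c, hF⟩ := he.exists_approx x (half_pos hε)
  obtain ⟨a, ha, -, hac⟩ := he.exists_norming F c
  -- a finite combination of the coordinate functionals, so it vanishes at `x`
  set φ : X →L[ℝ] ℝ := ∑ j ∈ F, a j • ψ j with hφ
  have hφx : φ x = 0 := by simp [hφ, hx]
  have hφe : ∀ n, φ (e n) = if n ∈ F then a n else 0 := by
    intro n; simp [hφ, h2]
  obtain ⟨φ', h1', h2'⟩ := he.exists_functional (he.trunc_mem_dualBall ha F)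
  have hd : DenseRange (Finsupp.linearCombination ℝ e) := by
    have := he.2.1
    rwa [← Finsupp.range_linearCombination] at this
  have hφφ : φ = φ' := by
    refine DFunLike.coe_injective (hd.equalizer φ.continuous φ'.continuous ?_)
    funext b
    simp [Finsupp.linearCombination_apply, Finsupp.sum, map_sum, hφe, h2']
  have h3 : φ (∑ j ∈ F, c j • e j) = ‖∑ j ∈ F, c j • e j‖ := by
    rw [← hac, map_sum]
    refine Finset.sum_congr rfl fun j hj => ?_
    simp [hφe, hj, mul_comm]
  have h4 := h1' (x - ∑ j ∈ F, c j • e j)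
  rw [← hφφ, map_sub, hφx, h3, zero_sub, abs_neg, abs_norm] at h4
  have h5 : ‖x‖ ≤ ‖x - ∑ j ∈ F, c j • e j‖ + ‖∑ j ∈ F, c j • e j‖ := by
    simpa using norm_add_le (x - ∑ j ∈ F, c j • e j) (∑ j ∈ F, c j • e j)
  linarith

/-- A reflexive space with a symmetric basis is not `c₀`: long sums of coefficients bounded below
cannot stay bounded. -/
theorem IsSymmetricBasis.exists_large (he : IsSymmetricBasis e)
    (hrefl : Function.Surjective (NormedSpace.inclusionInDoubleDual ℝ X)) {ε : ℝ} (hε : 0 < ε)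
    (M : ℝ) : ∃ N : ℕ, ∀ c : ℕ → ℝ, (∀ j < N, ε ≤ |c j|) →
      M < ‖∑ j ∈ Finset.range N, c j • e j‖ := by
  by_contra! h
  choose c hc hM using h
  obtain ⟨x, hx⟩ := exists_weak_limit hrefl _ M hM
  -- every coordinate of the weak limit of the partial sums would be at least `ε` in absolute value
  obtain ⟨ψ, h1, h2⟩ := he.exists_coords
  obtain ⟨n, hn⟩ := he.coords_tendsto h1 h2 x hε
  refine absurd hn (not_lt.2 (ge_of_tendsto (hx (ψ n)).abs ?_))
  refine Filter.Eventually.filter_mono Nat.hyperfilter_le_atTop ?_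
  filter_upwards [eventually_gt_atTop n] with N hN
  have : ψ n (∑ j ∈ Finset.range N, c N j • e j) = c N n := by
    simp [map_sum, h2, hN]
  rw [this]
  exact hc N n hN

/-- The basis of a reflexive space is shrinking: the tails of a functional are small in norm. -/
theorem IsSymmetricBasis.shrinking (he : IsSymmetricBasis e)
    (hrefl : Function.Surjective (NormedSpace.inclusionInDoubleDual ℝ X)) {a : ℕ → ℝ}
    (ha : a ∈ dualBall e) {ε : ℝ} (hε : 0 < ε) :
    ∃ J : ℕ, ∀ F : Finset ℕ, (∀ j ∈ F, J ≤ j) → ∀ c : ℕ → ℝ,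
      |∑ j ∈ F, a j * c j| ≤ ε * ‖∑ j ∈ F, c j • e j‖ := by
  by_contra! h
  choose F hF c hc using h
  obtain ⟨φ, h1, h2⟩ := he.exists_functional ha
  obtain ⟨ψ, hψ1, hψ2⟩ := he.exists_coords
  set v : ℕ → X := fun J => ∑ j ∈ F J, c J j • e j with hv
  have hφv : ∀ J, φ (v J) = ∑ j ∈ F J, a j * c J j := by
    intro J; simp [hv, map_sum, h2, mul_comm]
  have hv0 : ∀ J, 0 < ‖v J‖ := by
    intro J
    by_contra! h0
    have h0' : v J = 0 := norm_le_zero_iff.1 h0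
    have := hc J
    rw [← hφv] at this
    change ε * ‖v J‖ < _ at this
    rw [h0'] at this
    simp at this
  -- the normalized blocks `v J` move to infinity, so their weak limit has zero coordinates
  obtain ⟨x, hx⟩ := exists_weak_limit hrefl (fun J => ‖v J‖⁻¹ • v J) 1 (fun J => by
    rw [norm_smul, norm_inv, norm_norm, inv_mul_cancel₀ (hv0 J).ne'])
  have hx0 : x = 0 := by
    refine he.eq_zero_of_coords hψ2 fun n => tendsto_nhds_unique (hx (ψ n)) ?_
    refine Tendsto.congr' ?_ tendsto_const_nhds
    refine Filter.Eventually.filter_mono Nat.hyperfilter_le_atTop ?_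
    filter_upwards [eventually_gt_atTop n] with J hJ
    rw [map_smul, hv, map_sum, Finset.sum_eq_zero, smul_zero]
    intro j hj
    have : j ≠ n := by have := hF J j hj; omega
    simp [hψ2, this]
  have h3 := ge_of_tendsto' (b := ε) (hx φ).abs (fun J => by
    rw [map_smul, smul_eq_mul, abs_mul, abs_inv, abs_norm, hφv, ← div_eq_inv_mul,
      le_div_iff₀ (hv0 J)]
    exact (hc J).le)
  rw [hx0, map_zero, abs_zero] at h3
  linarith

theorem IsSymmetricBasis.tendsto_zero (he : IsSymmetricBasis e)
    (hrefl : Function.Surjective (NormedSpace.inclusionInDoubleDual ℝ X)) {a : ℕ → ℝ}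
    (ha : a ∈ dualBall e) : Tendsto (fun n => |a n|) atTop (𝓝 0) := by
  rw [Metric.tendsto_atTop]
  intro ε hε
  obtain ⟨J, hJ⟩ := he.shrinking hrefl ha (half_pos hε)
  refine ⟨J, fun n hn => ?_⟩
  have := hJ {n} (by simpa using hn) (fun _ => 1)
  simp [he.1] at this
  simp
  linarith

end Geometry

/-! ### Integrals over boxes and lower bounds for the norm -/

section Boxes

variable {d : ℕ}

/-- The open box with lower corner `p.1` and upper corner `p.2`; it is empty unless
`p.1 i < p.2 i` for all `i`. -/
def openBox (p : (Fin d → ℝ) × (Fin d → ℝ)) : Set (Fin d → ℝ) :=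
  Set.pi Set.univ fun i => Set.Ioo (p.1 i) (p.2 i)

theorem mem_openBox {p : (Fin d → ℝ) × (Fin d → ℝ)} {x : Fin d → ℝ} :
    x ∈ openBox p ↔ ∀ i, p.1 i < x i ∧ x i < p.2 i := by
  simp [openBox]

theorem isOpen_openBox (p : (Fin d → ℝ) × (Fin d → ℝ)) : IsOpen (openBox p) :=
  isOpen_set_pi Set.finite_univ fun _ _ => isOpen_Ioo

theorem measurableSet_openBox (p : (Fin d → ℝ) × (Fin d → ℝ)) : MeasurableSet (openBox p) :=
  (isOpen_openBox p).measurableSet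

theorem isOpenParallelepiped_openBox {p : (Fin d → ℝ) × (Fin d → ℝ)} (h : (openBox p).Nonempty) :
    IsOpenParallelepiped (openBox p) := by
  obtain ⟨x, hx⟩ := h
  exact ⟨p.1, p.2, fun i => ((mem_openBox.1 hx) i).1.trans ((mem_openBox.1 hx) i).2, rfl⟩

theorem sum_abs_setIntegral_le {ι : Type*} {f : (Fin d → ℝ) → ℝ} (hf : Integrable f)
    (F : Finset ι) (T : ι → Set (Fin d → ℝ)) (hT : ∀ j ∈ F, MeasurableSet (T j))
    (hd : (F : Set ι).PairwiseDisjoint T) :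
    ∑ j ∈ F, |∫ x in T j, f x| ≤ ∫ x, |f x| := by
  calc ∑ j ∈ F, |∫ x in T j, f x| ≤ ∑ j ∈ F, ∫ x in T j, |f x| :=
        Finset.sum_le_sum fun j _ => abs_integral_le_integral_abs
    _ = ∫ x in ⋃ j ∈ F, T j, |f x| :=
        (integral_biUnion_finset F hT hd fun j _ => hf.abs.integrableOn).symm
    _ ≤ ∫ x, |f x| := setIntegral_le_integral hf.abs (ae_of_all _ fun x => abs_nonneg _)

/-- The indicator of a box, evaluated at `x`, depends continuously on the box unless `x` lies on one
of the face hyperplanes, and these are null. -/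
theorem continuous_setIntegral_openBox {f : (Fin d → ℝ) → ℝ} (hf : Integrable f) :
    Continuous fun p : (Fin d → ℝ) × (Fin d → ℝ) => ∫ x in openBox p, f x := by
  classical
  have e1 : (fun p : (Fin d → ℝ) × (Fin d → ℝ) => ∫ x in openBox p, f x)
      = fun p => ∫ x, (openBox p).indicator f x := by
    funext p
    rw [integral_indicator (measurableSet_openBox p)]
  rw [e1, continuous_iff_continuousAt]
  intro p
  refine continuousAt_of_dominated (bound := fun x => |f x|) ?_ ?_ hf.abs ?_
  · exact Eventually.of_forall fun q =>
      hf.aestronglyMeasurable.indicator (measurableSet_openBox q)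
  · refine Eventually.of_forall fun q => ae_of_all _ fun x => ?_
    exact norm_indicator_le_norm_self f x
  · have hne : ∀ᵐ x : Fin d → ℝ, ∀ i, x i ≠ p.1 i ∧ x i ≠ p.2 i := by
      rw [ae_all_iff]
      intro i
      have h1 := Measure.pi_hyperplane (fun _ : Fin d => (volume : Measure ℝ)) i (p.1 i)
      have h2 := Measure.pi_hyperplane (fun _ : Fin d => (volume : Measure ℝ)) i (p.2 i)
      have h1' : ∀ᵐ x : Fin d → ℝ, x i ≠ p.1 i := by
        rw [ae_iff]; simpa [volume_pi] using h1
      have h2' : ∀ᵐ x : Fin d → ℝ, x i ≠ p.2 i := by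
        rw [ae_iff]; simpa [volume_pi] using h2
      filter_upwards [h1', h2'] with x a b using ⟨a, b⟩
    filter_upwards [hne] with x hx
    by_cases hxp : x ∈ openBox p
    · have : ∀ᶠ q in 𝓝 p, (openBox q).indicator f x = f x := by
        have h : ∀ᶠ q : (Fin d → ℝ) × (Fin d → ℝ) in 𝓝 p, ∀ i, q.1 i < x i ∧ x i < q.2 i := by
          rw [eventually_all]
          intro i
          have c1 : Continuous fun q : (Fin d → ℝ) × (Fin d → ℝ) => q.1 i := by fun_prop
          have c2 : Continuous fun q : (Fin d → ℝ) × (Fin d → ℝ) => q.2 i := by fun_prop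
          exact (c1.continuousAt.eventually_lt continuousAt_const (mem_openBox.1 hxp i).1).and
            (continuousAt_const.eventually_lt c2.continuousAt (mem_openBox.1 hxp i).2)
        filter_upwards [h] with q hq
        exact Set.indicator_of_mem (mem_openBox.2 hq) f
      exact (continuousAt_const (y := f x)).congr (this.mono fun q hq => hq.symm)
    · have : ∀ᶠ q in 𝓝 p, (openBox q).indicator f x = 0 := by
        rw [mem_openBox] at hxp
        push Not at hxp
        obtain ⟨i, hi⟩ := hxp
        have c1 : Continuous fun q : (Fin d → ℝ) × (Fin d → ℝ) => q.1 i := by fun_prop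
        have c2 : Continuous fun q : (Fin d → ℝ) × (Fin d → ℝ) => q.2 i := by fun_prop
        have h : ∀ᶠ q : (Fin d → ℝ) × (Fin d → ℝ) in 𝓝 p, x i < q.1 i ∨ q.2 i < x i := by
          rcases lt_or_ge (p.1 i) (x i) with h | h
          · have := lt_of_le_of_ne (hi h) (Ne.symm (hx i).2)
            exact (c2.continuousAt.eventually_lt continuousAt_const this).mono fun q => Or.inr
          · have := lt_of_le_of_ne h (hx i).1
            exact (continuousAt_const.eventually_lt c1.continuousAt this).mono fun q => Or.inl
        filter_upwards [h] with q hq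
        refine Set.indicator_of_notMem (fun hm => ?_) f
        have := mem_openBox.1 hm i
        rcases hq with hq | hq
        · exact lt_asymm hq this.1
        · exact lt_asymm hq this.2
      exact (continuousAt_const (y := (0 : ℝ))).congr (this.mono fun q hq => hq.symm)

/-- Cutting a box by the hyperplane `x i = r`. -/
theorem setIntegral_openBox_cut {f : (Fin d → ℝ) → ℝ} (hf : Integrable f)
    (p : (Fin d → ℝ) × (Fin d → ℝ)) (i : Fin d) {r : ℝ} (h1 : p.1 i ≤ r) (h2 : r ≤ p.2 i) :
    ∫ x in openBox p, f x = (∫ x in openBox (p.1, Function.update p.2 i r), f x)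
      + ∫ x in openBox (Function.update p.1 i r, p.2), f x := by
  classical
  rw [← setIntegral_union _ (measurableSet_openBox _) hf.integrableOn hf.integrableOn]
  · refine setIntegral_congr_set ?_
    have h := Measure.pi_hyperplane (fun _ : Fin d => (volume : Measure ℝ)) i r
    have h' : ∀ᵐ x : Fin d → ℝ, x i ≠ r := by
      rw [ae_iff]; simpa [volume_pi] using h
    filter_upwards [h'] with x hx
    refine propext ?_
    change x ∈ openBox p ↔ x ∈ openBox _ ∪ openBox _
    rw [Set.mem_union, mem_openBox, mem_openBox, mem_openBox]
    constructor
    · intro hp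
      rcases lt_or_gt_of_ne hx with hl | hl
      · refine Or.inl fun j => ⟨(hp j).1, ?_⟩
        by_cases hj : j = i
        · subst hj; simpa using hl
        · simpa [hj] using (hp j).2
      · refine Or.inr fun j => ⟨?_, (hp j).2⟩
        by_cases hj : j = i
        · subst hj; simpa using hl
        · simpa [hj] using (hp j).1
    · rintro (hp | hp) j
      · refine ⟨(hp j).1, ?_⟩
        have := (hp j).2
        by_cases hj : j = i
        · subst hj
          simp only [Function.update_self] at this
          linarith
        · simpa [hj] using this
      · refine ⟨?_, (hp j).2⟩
        have := (hp j).1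
        by_cases hj : j = i
        · subst hj
          simp only [Function.update_self] at this
          linarith
        · simpa [hj] using this
  · rw [Set.disjoint_left]
    intro x hx hx'
    have a := (mem_openBox.1 hx i).2
    have b := (mem_openBox.1 hx' i).1
    simp only [Function.update_self] at a b
    exact lt_asymm a b

theorem openBox_subset {p q : (Fin d → ℝ) × (Fin d → ℝ)} (h1 : ∀ i, p.1 i ≤ q.1 i)
    (h2 : ∀ i, q.2 i ≤ p.2 i) : openBox q ⊆ openBox p := by
  intro x hx
  rw [mem_openBox] at *
  exact fun i => ⟨(h1 i).trans_lt (hx i).1, (hx i).2.trans_le (h2 i)⟩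

end Boxes

section JF

variable {d : ℕ} {Ω : Set (Fin d → ℝ)} {X : Type*} [NormedAddCommGroup X] [NormedSpace ℝ X]
  {e : ℕ → X}

theorem IsOpenParallelepiped.eq_openBox {T : Set (Fin d → ℝ)} (h : IsOpenParallelepiped T) :
    ∃ p, T = openBox p := by
  obtain ⟨a, b, -, rfl⟩ := h
  exact ⟨(a, b), rfl⟩

theorem bddAbove_JFNorm_set (he : IsSymmetricBasis e) {f : (Fin d → ℝ) → ℝ} (hf : Integrable f) :
    BddAbove { r | ∃ (m : ℕ) (T : Fin m → Set (Fin d → ℝ)),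
      (∀ j, IsOpenParallelepiped (T j) ∧ T j ⊆ Ω) ∧
      (Pairwise fun i j => Disjoint (T i) (T j)) ∧
      r = ‖∑ j : Fin m, (∫ x in T j, f x) • e (j : ℕ)‖ } := by
  refine ⟨∫ x, |f x|, ?_⟩
  rintro _ ⟨m, T, hT, hd, rfl⟩
  refine (norm_sum_le _ _).trans (le_trans (le_of_eq ?_)
    (sum_abs_setIntegral_le hf Finset.univ T (fun j _ => ?_) (fun i _ j _ hij => hd hij)))
  · simp [norm_smul, he.1]
  · obtain ⟨p, hp⟩ := (hT j).1.eq_openBox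
    rw [hp]
    exact measurableSet_openBox p

/-- The lower bound for the `JF` norm given by a finite family of disjoint boxes, some of which may
be empty. -/
theorem norm_sum_le_JFNorm (he : IsSymmetricBasis e) {f : (Fin d → ℝ) → ℝ} (hf : Integrable f)
    (F : Finset ℕ) (p : ℕ → (Fin d → ℝ) × (Fin d → ℝ)) (hp : ∀ j ∈ F, openBox (p j) ⊆ Ω)
    (hd : ∀ i ∈ F, ∀ j ∈ F, i ≠ j → Disjoint (openBox (p i)) (openBox (p j))) :
    ‖∑ j ∈ F, (∫ x in openBox (p j), f x) • e j‖ ≤ JFNorm e Ω f := by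
  classical
  set G := F.filter fun j => (openBox (p j)).Nonempty with hG
  have e1 : ∑ j ∈ F, (∫ x in openBox (p j), f x) • e j
      = ∑ j ∈ G, (∫ x in openBox (p j), f x) • e j := by
    symm
    refine Finset.sum_subset (Finset.filter_subset _ _) fun j hj hj' => ?_
    have : openBox (p j) = ∅ := by
      by_contra h
      exact hj' (Finset.mem_filter.2 ⟨hj, Set.nonempty_iff_ne_empty.2 h⟩)
    rw [this]
    simp
  rw [e1, he.norm_sum_finset]
  have hmem : ∀ j : Fin G.card, (G.equivFin.symm j : ℕ) ∈ F ∧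
      (openBox (p (G.equivFin.symm j : ℕ))).Nonempty := fun j =>
    Finset.mem_filter.1 (G.equivFin.symm j).2
  refine le_csSup (bddAbove_JFNorm_set he hf)
    ⟨G.card, fun j => openBox (p (G.equivFin.symm j : ℕ)), fun j =>
      ⟨isOpenParallelepiped_openBox (hmem j).2, hp _ (hmem j).1⟩, fun i j hij => ?_, rfl⟩
  refine hd _ (hmem i).1 _ (hmem j).1 fun h => hij ?_
  exact G.equivFin.symm.injective (Subtype.ext h)

theorem abs_setIntegral_le_JFNorm (he : IsSymmetricBasis e) {f : (Fin d → ℝ) → ℝ}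
    (hf : Integrable f) {p : (Fin d → ℝ) × (Fin d → ℝ)} (hp : openBox p ⊆ Ω) :
    |∫ x in openBox p, f x| ≤ JFNorm e Ω f := by
  have := norm_sum_le_JFNorm (Ω := Ω) he hf {0} (fun _ => p) (fun _ _ => hp) (by simp)
  simpa [norm_smul, he.1] using this

end JF

/-! ### Selection of a subsequence -/

section Selection

/-- Diagonal argument: countably many properties, each attainable along a subsequence and each
inherited by sequences that are eventually subsequences, hold simultaneously along one
subsequence. -/
theorem exists_diagonal {ι : Type*} [Countable ι] [Nonempty ι] (P : ι → (ℕ → ℕ) → Prop)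
    (h1 : ∀ l s, StrictMono s → ∃ φ : ℕ → ℕ, StrictMono φ ∧ P l (s ∘ φ))
    (h2 : ∀ l s s', (∀ᶠ k in atTop, ∃ j ≥ k, s' k = s j) → P l s → P l s') :
    ∃ s : ℕ → ℕ, StrictMono s ∧ ∀ l, P l s := by
  obtain ⟨g, hg⟩ := exists_surjective_nat ι
  choose φ hφ hP using h1
  let S : ℕ → {s : ℕ → ℕ // StrictMono s} := fun n => Nat.rec ⟨id, strictMono_id⟩
    (fun l s => ⟨s.1 ∘ φ (g l) s.1 s.2, s.2.comp (hφ _ _ _)⟩) n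
  have hS : ∀ l, (S (l + 1)).1 = (S l).1 ∘ φ (g l) (S l).1 (S l).2 := fun l => rfl
  have hsub : ∀ l k, l ≤ k → ∀ n, ∃ j ≥ n, (S k).1 n = (S l).1 j := by
    intro l k hlk
    induction k, hlk using Nat.le_induction with
    | base => exact fun n => ⟨n, le_rfl, rfl⟩
    | succ k _ ih =>
      intro n
      obtain ⟨j, hj, h⟩ := ih (φ (g k) (S k).1 (S k).2 n)
      exact ⟨j, ((hφ _ _ _).le_apply).trans hj, by rw [hS]; exact h⟩
  refine ⟨fun k => (S k).1 k, strictMono_nat_of_lt_succ fun k => ?_, fun l => ?_⟩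
  · obtain ⟨j, hj, h⟩ := hsub k (k + 1) k.le_succ (k + 1)
    change (S k).1 k < (S (k + 1)).1 (k + 1)
    rw [h]
    exact (S k).2 (by omega)
  · obtain ⟨n, rfl⟩ := hg l
    refine h2 _ (S (n + 1)).1 _ ?_ (by rw [hS]; exact hP _ _ _)
    filter_upwards [eventually_ge_atTop (n + 1)] with k hk
    exact hsub (n + 1) k hk k

variable {d : ℕ} {Ω : Set (Fin d → ℝ)} {X : Type*} [NormedAddCommGroup X] [NormedSpace ℝ X]
  {e : ℕ → X}

/-- Some box inside `Ω` and inside the slab `|x i - t| < δ` carries an integral of `f` larger than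
`ε` in absolute value. -/
def SlabLarge (Ω : Set (Fin d → ℝ)) (i : Fin d) (t ε δ : ℝ) (f : (Fin d → ℝ) → ℝ) : Prop :=
  ∃ p, openBox p ⊆ Ω ∧ (∀ x ∈ openBox p, |x i - t| < δ) ∧ ε < |∫ x in openBox p, f x|

/-- If the functions `f (s k)` eventually have large integrals in arbitrarily thin slabs around each
point of `B`, then `B` has a bounded number of points, since slabs around distinct points provide
disjoint boxes. -/
theorem card_lt_of_slabLarge (he : IsSymmetricBasis e) {f : ℕ → (Fin d → ℝ) → ℝ}
    (hf : ∀ n, Integrable (f n)) {C : ℝ} (hC : ∀ n, JFNorm e Ω (f n) ≤ C) {ε : ℝ} {N : ℕ}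
    (hN : ∀ c : ℕ → ℝ, (∀ j < N, ε ≤ |c j|) → C < ‖∑ j ∈ Finset.range N, c j • e j‖)
    (s : ℕ → ℕ) (i : Fin d) (B : Finset ℝ)
    (hB : ∀ t ∈ B, ∀ δ > 0, ∀ᶠ k in atTop, SlabLarge Ω i t ε δ (f (s k))) : B.card < N := by
  by_contra! hcard
  obtain ⟨B', hB'B, hB'⟩ := Finset.exists_subset_card_eq hcard
  have hδ : ∃ δ : ℝ, 0 < δ ∧ ∀ q ∈ B'.offDiag, 2 * δ < |q.1 - q.2| := by
    have : ∀ᶠ δ in 𝓝[>] (0 : ℝ), 0 < δ ∧ ∀ q ∈ B'.offDiag, 2 * δ < |q.1 - q.2| := by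
      refine (eventually_mem_nhdsWithin).and ((Finset.eventually_all _).2 fun q hq => ?_)
      have hq' : 0 < |q.1 - q.2| := by
        rw [abs_pos, sub_ne_zero]
        exact (Finset.mem_offDiag.1 hq).2.2
      filter_upwards [Ioo_mem_nhdsGT (half_pos hq')] with δ hδ
      linarith [hδ.2]
    exact this.exists
  obtain ⟨δ, hδ0, hδ⟩ := hδ
  have hk : ∀ᶠ k in atTop, ∀ t ∈ B', SlabLarge Ω i t ε δ (f (s k)) :=
    (Finset.eventually_all _).2 fun t ht => hB t (hB'B ht) δ hδ0
  obtain ⟨k, hk⟩ := hk.exists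
  choose! p hp1 hp2 hp3 using hk
  let τ : ℕ → ℝ := fun j => if h : j < N then B'.orderEmbOfFin hB' ⟨j, h⟩ else 0
  have hτ : ∀ j < N, τ j ∈ B' := by
    intro j hj
    simp only [τ, hj, dif_pos]
    exact Finset.orderEmbOfFin_mem _ _ _
  have hτi : ∀ j < N, ∀ l < N, j ≠ l → τ j ≠ τ l := by
    intro j hj l hl hjl h
    simp only [τ, hj, hl, dif_pos] at h
    exact hjl (by simpa using (B'.orderEmbOfFin hB').injective h)
  have h1 := hN (fun j => ∫ x in openBox (p (τ j)), f (s k) x)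
    fun j hj => (hp3 _ (hτ j hj)).le
  have h2 := norm_sum_le_JFNorm (Ω := Ω) he (hf (s k)) (Finset.range N) (fun j => p (τ j))
    (fun j hj => hp1 _ (hτ j (Finset.mem_range.1 hj)))
    (fun j hj l hl hjl => by
      rw [Finset.mem_range] at hj hl
      rw [Set.disjoint_left]
      intro x hx hx'
      have a := hp2 _ (hτ j hj) x hx
      have b := hp2 _ (hτ l hl) x hx'
      have c := hδ (τ j, τ l) (Finset.mem_offDiag.2 ⟨hτ j hj, hτ l hl, hτi j hj l hl hjl⟩)
      rw [abs_lt] at a b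
      rcases abs_cases (τ j - τ l) with h | h <;> simp only [h.1] at c <;> linarith)
  linarith [hC (s k)]

/-- Along a subsequence, all but finitely many hyperplanes `x i = t` have slabs in which boxes
eventually carry integrals at most `ε`. Otherwise one extracts again and again, each time adding a
bad hyperplane, until there are more of them than `card_lt_of_slabLarge` allows. -/
theorem exists_subseq_slab (he : IsSymmetricBasis e)
    (hrefl : Function.Surjective (NormedSpace.inclusionInDoubleDual ℝ X))
    {f : ℕ → (Fin d → ℝ) → ℝ} (hf : ∀ n, Integrable (f n)) {C : ℝ}
    (hC : ∀ n, JFNorm e Ω (f n) ≤ C) {ε : ℝ} (hε : 0 < ε) (i : Fin d) (s : ℕ → ℕ) :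
    ∃ φ : ℕ → ℕ, StrictMono φ ∧ ∃ B : Finset ℝ, ∀ t ∉ B, ∃ δ > 0, ∀ᶠ k in atTop,
      ¬ SlabLarge Ω i t ε δ (f (s (φ k))) := by
  classical
  obtain ⟨N, hN⟩ := he.exists_large hrefl hε C
  by_contra! hcon
  have key : ∀ n : ℕ, ∃ φ : ℕ → ℕ, StrictMono φ ∧ ∃ B : Finset ℝ, B.card = n ∧
      ∀ t ∈ B, ∀ δ > 0, ∀ᶠ k in atTop, SlabLarge Ω i t ε δ (f (s (φ k))) := by
    intro n
    induction n with
    | zero => exact ⟨id, strictMono_id, ∅, rfl, by simp⟩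
    | succ n ih =>
      obtain ⟨φ, hφ, B, hBn, hB⟩ := ih
      obtain ⟨t, htB, ht⟩ := hcon φ hφ B
      have ht' : ∀ l : ℕ, ∃ᶠ k in atTop, SlabLarge Ω i t ε (1 / ((l : ℝ) + 1)) (f (s (φ k))) := by
        intro l
        have := ht (1 / ((l : ℝ) + 1)) (by positivity)
        simpa using this
      obtain ⟨ψ, hψ, hψ'⟩ := extraction_forall_of_frequently ht'
      refine ⟨φ ∘ ψ, hφ.comp hψ, insert t B, by rw [Finset.card_insert_of_notMem htB, hBn], ?_⟩
      intro r hr δ hδ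
      rcases Finset.mem_insert.1 hr with rfl | hr
      · obtain ⟨L, hL⟩ := exists_nat_one_div_lt hδ
        filter_upwards [eventually_ge_atTop L] with k hk
        obtain ⟨p, h1, h2, h3⟩ := hψ' k
        refine ⟨p, h1, fun x hx => (h2 x hx).trans_le (le_trans ?_ hL.le), h3⟩
        exact one_div_le_one_div_of_le (by positivity) (by gcongr)
      · exact hψ.tendsto_atTop.eventually (hB r hr δ hδ)
  obtain ⟨φ, -, B, hBn, hB⟩ := key N
  have := card_lt_of_slabLarge he hf hC hN (s ∘ φ) i B hB
  omega

theorem abs_le_of_not_slabLarge {i : Fin d} {t ε δ : ℝ} {f : (Fin d → ℝ) → ℝ}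
    (h : ¬ SlabLarge Ω i t ε δ f) {p : (Fin d → ℝ) × (Fin d → ℝ)} (hp : openBox p ⊆ Ω)
    (hx : ∀ x ∈ openBox p, |x i - t| < δ) : |∫ x in openBox p, f x| ≤ ε := by
  by_contra! h'
  exact h ⟨p, hp, hx, h'⟩

theorem cauchySeq_of_approx {x : ℕ → ℝ}
    (h : ∀ ε > 0, ∃ y : ℕ → ℝ, CauchySeq y ∧ ∀ᶠ k in atTop, |x k - y k| ≤ ε) : CauchySeq x := by
  rw [Metric.cauchySeq_iff]
  intro ε hε
  obtain ⟨y, hy, hxy⟩ := h (ε / 4) (by positivity)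
  obtain ⟨N, hN⟩ := Metric.cauchySeq_iff.1 hy (ε / 4) (by positivity)
  obtain ⟨N', hN'⟩ := eventually_atTop.1 hxy
  refine ⟨max N N', fun m hm n hn => ?_⟩
  have a := hN m (le_of_max_le_left hm) n (le_of_max_le_left hn)
  have b := hN' m (le_of_max_le_right hm)
  have c := hN' n (le_of_max_le_right hn)
  rw [Real.dist_eq] at *
  rw [abs_lt] at *
  rw [abs_le] at b c
  constructor <;> linarith

/-- A Helly type selection principle: a `JF`-bounded sequence has a subsequence whose integrals
converge over every box in `Ω`. -/
theorem exists_subseq_cauchy (hd : 1 ≤ d) (he : IsSymmetricBasis e)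
    (hrefl : Function.Surjective (NormedSpace.inclusionInDoubleDual ℝ X))
    {f : ℕ → (Fin d → ℝ) → ℝ} (hf : ∀ n, Integrable (f n)) {C : ℝ}
    (hC : ∀ n, JFNorm e Ω (f n) ≤ C) :
    ∃ s : ℕ → ℕ, StrictMono s ∧ ∀ p, openBox p ⊆ Ω →
      CauchySeq fun k => ∫ x in openBox p, f (s k) x := by
  classical
  have : Nonempty (Fin d × ℕ) := ⟨(⟨0, hd⟩, 0)⟩
  obtain ⟨s, hs, hsP⟩ := exists_diagonal (ι := Fin d × ℕ)
    (fun l s => ∃ B : Finset ℝ, ∀ t ∉ B, ∃ δ > 0, ∀ᶠ k in atTop,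
      ¬ SlabLarge Ω l.1 t (1 / ((l.2 : ℝ) + 1)) δ (f (s k)))
    (fun l s _ => exists_subseq_slab he hrefl hf hC (by positivity) l.1 s)
    (by
      rintro l s s' hss ⟨B, hB⟩
      refine ⟨B, fun t ht => ?_⟩
      obtain ⟨δ, hδ, h⟩ := hB t ht
      obtain ⟨K, hK⟩ := eventually_atTop.1 h
      refine ⟨δ, hδ, ?_⟩
      filter_upwards [hss, eventually_ge_atTop K] with k ⟨j, hj, hkj⟩ hk
      rw [hkj]
      exact hK j (hk.trans hj))
  choose B hB using hsP
  -- outside the countable dense set `D` of coordinates, thin slabs are eventually negligible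
  set D : Set ℝ := Set.range ((↑) : ℚ → ℝ) ∪ ⋃ l, (B l : Set ℝ) with hD
  have hDc : D.Countable :=
    (Set.countable_range _).union (Set.countable_iUnion fun l => (B l).countable_toSet)
  have hgood : ∀ (i : Fin d) (t : ℝ), t ∉ D → ∀ ε > 0, ∃ δ > 0, ∀ᶠ k in atTop,
      ∀ p, openBox p ⊆ Ω → (∀ x ∈ openBox p, |x i - t| < δ) →
        |∫ x in openBox p, f (s k) x| ≤ ε := by
    intro i t ht ε hε
    obtain ⟨n, hn⟩ := exists_nat_one_div_lt hε
    have htB : t ∉ B (i, n) := fun h =>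
      ht (Or.inr (Set.mem_iUnion.2 ⟨(i, n), h⟩))
    obtain ⟨δ, hδ, h⟩ := hB (i, n) t htB
    refine ⟨δ, hδ, h.mono fun k hk p hp hx => ?_⟩
    exact (abs_le_of_not_slabLarge hk hp hx).trans hn.le
  -- a face can be moved inwards to a coordinate in `D` at the cost of an eventually small integral
  have hright : ∀ (i : Fin d) (t w : ℝ), t < w → ∀ ε > 0, ∃ t' ∈ D, t ≤ t' ∧ t' < w ∧
      ∀ᶠ k in atTop, ∀ p, openBox p ⊆ Ω → (∀ x ∈ openBox p, t < x i ∧ x i < t') →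
        |∫ x in openBox p, f (s k) x| ≤ ε := by
    intro i t w htw ε hε
    by_cases ht : t ∈ D
    · refine ⟨t, ht, le_rfl, htw, Eventually.of_forall fun k p _ hx => ?_⟩
      have : openBox p = ∅ := Set.eq_empty_of_forall_notMem fun x h =>
        lt_asymm (hx x h).1 (hx x h).2
      simpa [this] using hε.le
    · obtain ⟨δ, hδ, h⟩ := hgood i t ht ε hε
      obtain ⟨q, hq1, hq2⟩ := exists_rat_btwn (show t < min w (t + δ) from
        lt_min htw (by linarith))
      refine ⟨q, Or.inl ⟨q, rfl⟩, hq1.le, hq2.trans_le (min_le_left _ _),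
        h.mono fun k hk p hp hx => hk p hp fun x hxp => ?_⟩
      have a := hx x hxp
      have b := hq2.trans_le (min_le_right _ _)
      rw [abs_lt]
      constructor <;> linarith
  have hleft : ∀ (i : Fin d) (t w : ℝ), w < t → ∀ ε > 0, ∃ t' ∈ D, w < t' ∧ t' ≤ t ∧
      ∀ᶠ k in atTop, ∀ p, openBox p ⊆ Ω → (∀ x ∈ openBox p, t' < x i ∧ x i < t) →
        |∫ x in openBox p, f (s k) x| ≤ ε := by
    intro i t w htw ε hε
    by_cases ht : t ∈ D
    · refine ⟨t, ht, htw, le_rfl, Eventually.of_forall fun k p _ hx => ?_⟩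
      have : openBox p = ∅ := Set.eq_empty_of_forall_notMem fun x h =>
        lt_asymm (hx x h).1 (hx x h).2
      simpa [this] using hε.le
    · obtain ⟨δ, hδ, h⟩ := hgood i t ht ε hε
      obtain ⟨q, hq1, hq2⟩ := exists_rat_btwn (show max w (t - δ) < t from
        max_lt htw (by linarith))
      refine ⟨q, Or.inl ⟨q, rfl⟩, (le_max_left _ _).trans_lt hq1, hq2.le,
        h.mono fun k hk p hp hx => hk p hp fun x hxp => ?_⟩
      have a := hx x hxp
      have b := (le_max_right _ _).trans_lt hq1
      rw [abs_lt]
      constructor <;> linarith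
  -- a further subsequence converges on the countably many boxes with coordinates in `D`
  have : Countable D := hDc.to_subtype
  let ι := (Fin d → D) × (Fin d → D)
  let bx : ι → (Fin d → ℝ) × (Fin d → ℝ) := fun q => (fun i => (q.1 i : ℝ), fun i => (q.2 i : ℝ))
  have hJ0 : 0 ≤ C := (abs_nonneg _).trans
    ((abs_setIntegral_le_JFNorm (Ω := Ω) (p := (0, 0)) he (hf 0) (fun x hx => by
      have := mem_openBox.1 hx ⟨0, hd⟩
      exact absurd (this.1.trans this.2) (lt_irrefl _))).trans (hC 0))
  obtain ⟨y, -, φ, hφ, hy⟩ := (isCompact_univ_pi (fun _ : ι => isCompact_Icc (a := -C)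
    (b := C))).tendsto_subseq (x := fun k q => if openBox (bx q) ⊆ Ω then
      ∫ x in openBox (bx q), f (s k) x else 0) (by
    intro k q _
    refine abs_le.1 ?_
    beta_reduce
    split_ifs with h
    · exact (abs_setIntegral_le_JFNorm he (hf _) h).trans (hC _)
    · simpa using hJ0)
  refine ⟨s ∘ φ, hs.comp hφ, ?_⟩
  -- induction on the set `I` of directions whose two face coordinates may lie outside `D`
  have key : ∀ I : Finset (Fin d), ∀ p, openBox p ⊆ Ω → (∀ i ∉ I, p.1 i ∈ D ∧ p.2 i ∈ D) →
      CauchySeq fun k => ∫ x in openBox p, f (s (φ k)) x := by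
    intro I
    induction I using Finset.induction_on with
    | empty =>
      intro p hp hpD
      let q : ι := (fun i => ⟨p.1 i, (hpD i (by simp)).1⟩, fun i => ⟨p.2 i, (hpD i (by simp)).2⟩)
      have hq : bx q = p := rfl
      have := (tendsto_pi_nhds.1 hy q).cauchySeq
      simpa [Function.comp_def, hq, hp] using this
    | insert i I hi ih =>
      intro p hp hpD
      by_cases hpe : p.1 i < p.2 i
      swap
      · have : openBox p = ∅ := Set.eq_empty_of_forall_notMem fun x h =>
          hpe ((mem_openBox.1 h i).1.trans (mem_openBox.1 h i).2)
        simp only [this, Measure.restrict_empty, integral_zero_measure]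
        exact cauchySeq_const _
      refine cauchySeq_of_approx fun ε hε => ?_
      obtain ⟨u, huD, hu1, hu2, hu⟩ := hright i (p.1 i) ((p.1 i + p.2 i) / 2) (by linarith) (ε / 2)
        (by positivity)
      obtain ⟨v, hvD, hv1, hv2, hv⟩ := hleft i (p.2 i) ((p.1 i + p.2 i) / 2) (by linarith) (ε / 2)
        (by positivity)
      have hup1 : ∀ j, p.1 j ≤ Function.update p.1 i u j := by
        intro j
        by_cases hj : j = i
        · subst hj; simpa using hu1
        · simp [hj]
      have hup2 : ∀ j, Function.update p.2 i v j ≤ p.2 j := by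
        intro j
        by_cases hj : j = i
        · subst hj; simpa using hv2
        · simp [hj]
      refine ⟨_, ih (Function.update p.1 i u, Function.update p.2 i v)
        ((openBox_subset hup1 hup2).trans hp) (fun j hj => ?_), ?_⟩
      · by_cases hji : j = i
        · subst hji; simpa using ⟨huD, hvD⟩
        · simpa [hji] using hpD j (by simp [hji, hj])
      · filter_upwards [hφ.tendsto_atTop.eventually hu, hφ.tendsto_atTop.eventually hv] with k hku hkv
        have c1 := setIntegral_openBox_cut (hf (s (φ k))) p i (r := u) hu1 (by linarith)
        have c2 := setIntegral_openBox_cut (hf (s (φ k))) (Function.update p.1 i u, p.2) i (r := v)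
          (by simp; linarith) hv2
        have i1 : openBox (p.1, Function.update p.2 i u) ⊆ openBox p :=
          openBox_subset (fun _ => le_rfl) (fun j => by
            by_cases hj : j = i
            · subst hj; simp only [Function.update_self]; linarith
            · simp [hj])
        have i2 : openBox (Function.update (Function.update p.1 i u) i v, p.2) ⊆ openBox p :=
          openBox_subset (fun j => by
            by_cases hj : j = i
            · subst hj; simp only [Function.update_self]; linarith
            · simp [hj]) (fun _ => le_rfl)
        have b1 := hku (p.1, Function.update p.2 i u) (i1.trans hp)
          (fun x hx => by simpa using mem_openBox.1 hx i)
        have b2 := hkv (Function.update (Function.update p.1 i u) i v, p.2) (i2.trans hp)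
          (fun x hx => by simpa using mem_openBox.1 hx i)
        rw [c1, c2]
        rw [abs_le] at b1 b2 ⊢
        constructor <;> linarith [b1.1, b1.2, b2.1, b2.2]
  intro p hp
  exact key Finset.univ p hp (by simp)

end Selection

/-! ### Norming functionals -/

section Functionals

variable {d : ℕ} {Ω : Set (Fin d → ℝ)} {X : Type*} [NormedAddCommGroup X] [NormedSpace ℝ X]
  {e : ℕ → X} {R : ℝ}

/-- Parameters `(a, p)` of the functionals `f ↦ ∑ j, a j * ∫ x in openBox (p j), f x` that norm
`JF_X(Ω)`: the coefficients come from the dual ball and decrease in absolute value, the boxes are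
disjoint, contained in `Ω`, and have corners in a fixed ball. -/
def normingSet (e : ℕ → X) (Ω : Set (Fin d → ℝ)) (R : ℝ) :
    Set ((ℕ → ℝ) × (ℕ → (Fin d → ℝ) × (Fin d → ℝ))) :=
  {q | q.1 ∈ dualBall e ∧ (Antitone fun j => |q.1 j|) ∧ (∀ j, q.2 j ∈ Metric.closedBall 0 R) ∧
    (∀ j, openBox (q.2 j) ⊆ Ω) ∧ ∀ i j, i ≠ j → Disjoint (openBox (q.2 i)) (openBox (q.2 j))}

theorem isOpen_mem_openBox (x : Fin d → ℝ) :
    IsOpen {p : (Fin d → ℝ) × (Fin d → ℝ) | x ∈ openBox p} := by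
  have : {p : (Fin d → ℝ) × (Fin d → ℝ) | x ∈ openBox p}
      = ⋂ i, ({p | p.1 i < x i} ∩ {p | x i < p.2 i}) := by
    ext p
    simp only [Set.mem_ofPred_eq, mem_openBox, Set.mem_iInter, Set.mem_inter_iff]
  rw [this]
  refine isOpen_iInter_of_finite fun i => (isOpen_lt ?_ ?_).inter (isOpen_lt ?_ ?_) <;> fun_prop

theorem isClosed_openBox_subset (Ω : Set (Fin d → ℝ)) :
    IsClosed {p : (Fin d → ℝ) × (Fin d → ℝ) | openBox p ⊆ Ω} := by
  have : {p : (Fin d → ℝ) × (Fin d → ℝ) | openBox p ⊆ Ω}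
      = ⋂ x ∈ Ωᶜ, {p : (Fin d → ℝ) × (Fin d → ℝ) | x ∈ openBox p}ᶜ := by
    ext p
    simp only [Set.mem_ofPred_eq, Set.mem_iInter, Set.mem_compl_iff, Set.subset_def]
    exact forall_congr' fun x => not_imp_not.symm
  rw [this]
  exact isClosed_biInter fun x _ => (isOpen_mem_openBox x).isClosed_compl

theorem isClosed_openBox_disjoint :
    IsClosed {p : ((Fin d → ℝ) × (Fin d → ℝ)) × ((Fin d → ℝ) × (Fin d → ℝ)) |
      Disjoint (openBox p.1) (openBox p.2)} := by
  have : {p : ((Fin d → ℝ) × (Fin d → ℝ)) × ((Fin d → ℝ) × (Fin d → ℝ)) |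
      Disjoint (openBox p.1) (openBox p.2)}
      = ⋂ x, ({p | x ∈ openBox p.1} ∩ {p | x ∈ openBox p.2})ᶜ := by
    ext p
    simp only [Set.mem_ofPred_eq, Set.mem_iInter, Set.mem_compl_iff, Set.disjoint_left,
      Set.mem_inter_iff, not_and]
  rw [this]
  exact isClosed_iInter fun x => (((isOpen_mem_openBox x).preimage continuous_fst).inter
    ((isOpen_mem_openBox x).preimage continuous_snd)).isClosed_compl

theorem isCompact_normingSet (he : IsSymmetricBasis e) : IsCompact (normingSet e Ω R) := by
  have hK : IsCompact ((Set.pi Set.univ fun _ : ℕ => Set.Icc (-1 : ℝ) 1) ×ˢ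
      (Set.pi Set.univ fun _ : ℕ =>
        Metric.closedBall (0 : (Fin d → ℝ) × (Fin d → ℝ)) R)) :=
    (isCompact_univ_pi fun _ => isCompact_Icc).prod
      (isCompact_univ_pi fun _ => isCompact_closedBall _ _)
  refine hK.of_isClosed_subset ?_ ?_
  · have c2 : ∀ j, Continuous fun q : (ℕ → ℝ) × (ℕ → (Fin d → ℝ) × (Fin d → ℝ)) => q.2 j :=
      fun j => (continuous_apply j).comp continuous_snd
    have c1 : ∀ j, Continuous fun q : (ℕ → ℝ) × (ℕ → (Fin d → ℝ) × (Fin d → ℝ)) => q.1 j :=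
      fun j => (continuous_apply j).comp continuous_fst
    refine (isClosed_dualBall.preimage continuous_fst).inter (IsClosed.inter ?_
      (IsClosed.inter ?_ (IsClosed.inter ?_ ?_)))
    · have : {q : (ℕ → ℝ) × (ℕ → (Fin d → ℝ) × (Fin d → ℝ)) | Antitone fun j => |q.1 j|}
          = ⋂ (i : ℕ) (j : ℕ) (_ : i ≤ j), {q | |q.1 j| ≤ |q.1 i|} := by
        ext q
        simp [Antitone]
      change IsClosed {q : (ℕ → ℝ) × (ℕ → (Fin d → ℝ) × (Fin d → ℝ)) | Antitone fun j => |q.1 j|}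
      rw [this]
      exact isClosed_iInter fun i => isClosed_iInter fun j => isClosed_iInter fun _ =>
        isClosed_le (c1 j).abs (c1 i).abs
    · change IsClosed {q : (ℕ → ℝ) × (ℕ → (Fin d → ℝ) × (Fin d → ℝ)) |
        ∀ j, q.2 j ∈ Metric.closedBall 0 R}
      rw [Set.ofPred_forall]
      exact isClosed_iInter fun j => Metric.isClosed_closedBall.preimage (c2 j)
    · change IsClosed {q : (ℕ → ℝ) × (ℕ → (Fin d → ℝ) × (Fin d → ℝ)) | ∀ j, openBox (q.2 j) ⊆ Ω}
      rw [Set.ofPred_forall]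
      exact isClosed_iInter fun j => (isClosed_openBox_subset Ω).preimage (c2 j)
    · change IsClosed {q : (ℕ → ℝ) × (ℕ → (Fin d → ℝ) × (Fin d → ℝ)) |
        ∀ i j, i ≠ j → Disjoint (openBox (q.2 i)) (openBox (q.2 j))}
      simp only [Set.ofPred_forall]
      exact isClosed_iInter fun i => isClosed_iInter fun j => isClosed_iInter fun _ =>
        isClosed_openBox_disjoint.preimage ((c2 i).prodMk (c2 j))
  · rintro q ⟨h1, -, h3, -, -⟩
    exact ⟨fun j _ => abs_le.1 (he.abs_le_one h1 j), fun j _ => h3 j⟩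

/-- The value at `f` of the functional with parameters `q`. -/
def pairing (f : (Fin d → ℝ) → ℝ) (q : (ℕ → ℝ) × (ℕ → (Fin d → ℝ) × (Fin d → ℝ))) : ℝ :=
  ∑' j, q.1 j * ∫ x in openBox (q.2 j), f x

theorem sum_abs_le_of_mem_normingSet {f : (Fin d → ℝ) → ℝ} (hf : Integrable f)
    {q : (ℕ → ℝ) × (ℕ → (Fin d → ℝ) × (Fin d → ℝ))} (hq : q ∈ normingSet e Ω R) (F : Finset ℕ) :
    ∑ j ∈ F, |∫ x in openBox (q.2 j), f x| ≤ ∫ x, |f x| :=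
  sum_abs_setIntegral_le hf F _ (fun _ _ => measurableSet_openBox _)
    fun i _ j _ hij => hq.2.2.2.2 i j hij

theorem summable_pairing (he : IsSymmetricBasis e) {f : (Fin d → ℝ) → ℝ} (hf : Integrable f)
    {q : (ℕ → ℝ) × (ℕ → (Fin d → ℝ) × (Fin d → ℝ))} (hq : q ∈ normingSet e Ω R) :
    Summable fun j => q.1 j * ∫ x in openBox (q.2 j), f x := by
  refine Summable.of_norm (summable_of_sum_range_le (c := ∫ x, |f x|) (fun _ => norm_nonneg _)
    fun n => le_trans (Finset.sum_le_sum fun j _ => ?_)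
      (sum_abs_le_of_mem_normingSet hf hq (Finset.range n)))
  rw [norm_mul, Real.norm_eq_abs, Real.norm_eq_abs]
  exact mul_le_of_le_one_left (abs_nonneg _) (he.abs_le_one hq.1 j)

theorem abs_pairing_sub_le (he : IsSymmetricBasis e) {f : (Fin d → ℝ) → ℝ} (hf : Integrable f)
    {q : (ℕ → ℝ) × (ℕ → (Fin d → ℝ) × (Fin d → ℝ))} (hq : q ∈ normingSet e Ω R) (J : ℕ) {B : ℝ}
    (hB : ∀ m ≥ J, |∑ j ∈ Finset.Ico J m, q.1 j * ∫ x in openBox (q.2 j), f x| ≤ B) :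
    |pairing f q - ∑ j ∈ Finset.range J, q.1 j * ∫ x in openBox (q.2 j), f x| ≤ B := by
  refine le_of_tendsto
    (((summable_pairing he hf hq).hasSum.tendsto_sum_nat.sub_const _).abs) ?_
  filter_upwards [eventually_ge_atTop J] with m hm
  rw [← Finset.sum_Ico_eq_sub _ hm]
  exact hB m hm

/-- For fixed `f` the pairing is a uniform limit of the continuous partial sums: the tail from `n` on
is at most `|a n| * ∫ |f|` as the `|a j|` decrease, and `a n → 0` uniformly by Dini's theorem. -/
theorem continuous_pairing (he : IsSymmetricBasis e)
    (hrefl : Function.Surjective (NormedSpace.inclusionInDoubleDual ℝ X))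
    {f : (Fin d → ℝ) → ℝ} (hf : Integrable f) :
    Continuous fun q : normingSet e Ω R => pairing f q.1 := by
  have : CompactSpace (normingSet e Ω R) := isCompact_iff_compactSpace.1 (isCompact_normingSet he)
  have c2 : ∀ j, Continuous fun q : normingSet e Ω R => q.1.2 j :=
    fun j => (continuous_apply j).comp (continuous_snd.comp continuous_subtype_val)
  have c1 : ∀ j, Continuous fun q : normingSet e Ω R => q.1.1 j :=
    fun j => (continuous_apply j).comp (continuous_fst.comp continuous_subtype_val)
  -- Dini's theorem: the decreasing coefficients decay uniformly on the compact parameter set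
  have hdini : TendstoUniformly (fun n (q : normingSet e Ω R) => |q.1.1 n|) (fun _ => 0) atTop :=
    Antitone.tendstoUniformly_of_forall_tendsto (fun n => (c1 n).abs)
      (fun i j hij q => q.2.2.1 hij) continuous_const
      (fun q => he.tendsto_zero hrefl q.2.1)
  have hunif : TendstoUniformly (fun n (q : normingSet e Ω R) =>
      ∑ j ∈ Finset.range n, q.1.1 j * ∫ x in openBox (q.1.2 j), f x)
      (fun q => pairing f q.1) atTop := by
    rw [Metric.tendstoUniformly_iff] at hdini ⊢
    intro ε hε
    have hI : 0 ≤ ∫ x, |f x| := integral_nonneg fun x => abs_nonneg _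
    filter_upwards [hdini (ε / ((∫ x, |f x|) + 1)) (by positivity)] with n hn q
    have hn' := hn q
    rw [Real.dist_eq, zero_sub, abs_neg, abs_abs, lt_div_iff₀ (by positivity)] at hn'
    rw [Real.dist_eq]
    refine lt_of_le_of_lt (abs_pairing_sub_le he hf q.2 n (B := |q.1.1 n| * ∫ x, |f x|) ?_) ?_
    · intro m _
      refine (Finset.abs_sum_le_sum_abs _ _).trans ?_
      refine le_trans (Finset.sum_le_sum fun j hj => ?_) (le_of_le_of_eq
        (mul_le_mul_of_nonneg_left (sum_abs_le_of_mem_normingSet hf q.2 (Finset.Ico n m))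
          (abs_nonneg (q.1.1 n))) rfl |> fun h => by rwa [Finset.mul_sum] at h)
      rw [abs_mul]
      exact mul_le_mul_of_nonneg_right (q.2.2.1 (Finset.mem_Ico.1 hj).1) (abs_nonneg _)
    · nlinarith [abs_nonneg (q.1.1 n)]
  refine hunif.continuous (Frequently.of_forall fun n => ?_)
  exact continuous_finsetSum _ fun j _ =>
    (c1 j).mul ((continuous_setIntegral_openBox hf).comp (c2 j))

theorem abs_pairing_le (he : IsSymmetricBasis e) {f : (Fin d → ℝ) → ℝ} (hf : Integrable f)
    {q : (ℕ → ℝ) × (ℕ → (Fin d → ℝ) × (Fin d → ℝ))} (hq : q ∈ normingSet e Ω R) :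
    |pairing f q| ≤ JFNorm e Ω f := by
  have := abs_pairing_sub_le he hf hq 0 (B := JFNorm e Ω f) fun m _ =>
    (hq.1 _ _).trans (norm_sum_le_JFNorm he hf _ q.2 (fun j _ => hq.2.2.2.1 j)
      fun i _ j _ hij => hq.2.2.2.2 i j hij)
  simpa using this

/-- A `JF`-bounded sequence whose integrals over each box tend to zero is null against each
norming functional, because the tails of the coefficient sequence are small in the dual norm. -/
theorem tendsto_pairing (he : IsSymmetricBasis e)
    (hrefl : Function.Surjective (NormedSpace.inclusionInDoubleDual ℝ X))
    {f : ℕ → (Fin d → ℝ) → ℝ} (hf : ∀ n, Integrable (f n)) {C : ℝ}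
    (hC : ∀ n, JFNorm e Ω (f n) ≤ C)
    (h0 : ∀ p, openBox p ⊆ Ω → Tendsto (fun n => ∫ x in openBox p, f n x) atTop (𝓝 0))
    {q : (ℕ → ℝ) × (ℕ → (Fin d → ℝ) × (Fin d → ℝ))} (hq : q ∈ normingSet e Ω R) :
    Tendsto (fun n => pairing (f n) q) atTop (𝓝 0) := by
  have hC0 : 0 ≤ C := ((abs_nonneg _).trans (abs_pairing_le he (hf 0) hq)).trans (hC 0)
  rw [Metric.tendsto_nhds]
  intro ε hε
  obtain ⟨J, hJ⟩ := he.shrinking hrefl hq.1 (ε := ε / (2 * (C + 1))) (by positivity)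
  have hfin : Tendsto (fun n => ∑ j ∈ Finset.range J, q.1 j * ∫ x in openBox (q.2 j), f n x)
      atTop (𝓝 0) := by
    have := tendsto_finsetSum (Finset.range J)
      fun j _ => (h0 (q.2 j) (hq.2.2.2.1 j)).const_mul (q.1 j)
    simpa using this
  rw [Metric.tendsto_nhds] at hfin
  filter_upwards [hfin (ε / 2) (by positivity)] with n hn
  have h1 := abs_pairing_sub_le he (hf n) hq J (B := ε / (2 * (C + 1)) * C) fun m _ =>
    (hJ _ (fun j hj => (Finset.mem_Ico.1 hj).1) _).trans
      (mul_le_mul_of_nonneg_left ((norm_sum_le_JFNorm he (hf n) _ q.2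
        (fun j _ => hq.2.2.2.1 j) fun i _ j _ hij => hq.2.2.2.2 i j hij).trans (hC n))
        (by positivity))
  have h2 : ε / (2 * (C + 1)) * C ≤ ε / 2 := by
    rw [div_mul_eq_mul_div, div_le_div_iff₀ (by positivity) (by positivity)]
    nlinarith
  rw [Real.dist_eq, sub_zero] at hn ⊢
  rw [abs_le] at h1
  rw [abs_lt] at hn ⊢
  constructor <;> linarith

theorem pairing_finsupp_sum (he : IsSymmetricBasis e) {f : ℕ → (Fin d → ℝ) → ℝ}
    (hf : ∀ n, Integrable (f n)) (a : ℕ →₀ ℝ)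
    {q : (ℕ → ℝ) × (ℕ → (Fin d → ℝ) × (Fin d → ℝ))} (hq : q ∈ normingSet e Ω R) :
    pairing (fun x => a.sum fun n t => t * f n x) q = a.sum fun n t => t * pairing (f n) q := by
  simp only [Finsupp.sum, pairing]
  simp only [← tsum_mul_left]
  rw [← Summable.tsum_finsetSum fun n _ => (summable_pairing he (hf n) hq).mul_left (a n)]
  refine tsum_congr fun j => ?_
  rw [integral_finsetSum _ fun n _ => ((hf n).const_mul (a n)).integrableOn, Finset.mul_sum]
  refine Finset.sum_congr rfl fun n _ => ?_
  rw [integral_const_mul]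
  ring

theorem mem_closedBall_of_openBox {p : (Fin d → ℝ) × (Fin d → ℝ)}
    (hR : Ω ⊆ Metric.closedBall 0 R) (hp : openBox p ⊆ Ω) (hlt : ∀ i, p.1 i < p.2 i) :
    p ∈ Metric.closedBall 0 R := by
  have hcl : closure (openBox p) ⊆ Metric.closedBall 0 R :=
    closure_minimal (hp.trans hR) Metric.isClosed_closedBall
  have h1 : p.1 ∈ closure (openBox p) := by
    rw [openBox, closure_pi_set]
    intro i _
    beta_reduce
    rw [closure_Ioo (hlt i).ne]
    exact ⟨le_rfl, (hlt i).le⟩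
  have h2 : p.2 ∈ closure (openBox p) := by
    rw [openBox, closure_pi_set]
    intro i _
    beta_reduce
    rw [closure_Ioo (hlt i).ne]
    exact ⟨(hlt i).le, le_rfl⟩
  have h1' := hcl h1
  have h2' := hcl h2
  rw [mem_closedBall_zero_iff] at *
  exact max_le h1' h2'

/-- The functionals parametrized by `normingSet` norm `JF_X(Ω)`. -/
theorem exists_lt_pairing (hd : 1 ≤ d) (he : IsSymmetricBasis e) (hR0 : 0 ≤ R)
    (hR : Ω ⊆ Metric.closedBall 0 R) {f : (Fin d → ℝ) → ℝ} {r : ℝ} (hr : r < JFNorm e Ω f) :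
    ∃ q ∈ normingSet e Ω R, r < pairing f q := by
  classical
  unfold JFNorm at hr
  obtain ⟨_, ⟨m, T, hT, hTd, rfl⟩, hlt⟩ := exists_lt_of_lt_csSup
    (by exact ⟨_, 0, Fin.elim0, fun j => j.elim0, fun j => j.elim0, rfl⟩) hr
  choose u v huv hTuv using fun j => (hT j).1
  have hTb : ∀ j, T j = openBox (u j, v j) := hTuv
  obtain ⟨a, ha, ha0, hav⟩ := he.exists_norming (Finset.range m)
    (fun j => if h : j < m then ∫ x in T ⟨j, h⟩, f x else 0)
  rw [Finset.sum_range, Finset.sum_range] at hav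
  simp only [Fin.is_lt, dif_pos, Fin.eta] at hav
  -- rearrange the family so that the coefficients decrease in absolute value
  set σ := Tuple.sort (fun j : Fin m => -|a j|) with hσ
  have hmono := Tuple.monotone_sort (fun j : Fin m => -|a j|)
  obtain ⟨π, hπ⟩ := exists_perm_extending (σ.toEmbedding.trans Fin.valEmbedding)
  have hπ' : ∀ j : Fin m, π j = σ j := hπ
  have hπm : ∀ j, m ≤ j → m ≤ π j := by
    intro j hj
    by_contra! h
    have : π (σ.symm ⟨π j, h⟩ : Fin m) = π j := by rw [hπ']; simp
    have := π.injective this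
    have := (σ.symm ⟨π j, h⟩).2
    omega
  have haπ : ∀ j, m ≤ j → a (π j) = 0 := fun j hj =>
    ha0 _ (by simpa using hπm j hj)
  have hempty : openBox ((0, 0) : (Fin d → ℝ) × (Fin d → ℝ)) = ∅ :=
    Set.eq_empty_of_forall_notMem fun x hx =>
      lt_asymm (mem_openBox.1 hx ⟨0, hd⟩).1 (mem_openBox.1 hx ⟨0, hd⟩).2
  let p : ℕ → (Fin d → ℝ) × (Fin d → ℝ) := fun j =>
    if h : j < m then (u (σ ⟨j, h⟩), v (σ ⟨j, h⟩)) else (0, 0)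
  have hp1 : ∀ j : Fin m, openBox (p j) = T (σ j) := by
    intro j
    simp [p, hTb]
  have hp2 : ∀ j, m ≤ j → p j = (0, 0) := by
    intro j hj
    simp [p, not_lt.2 hj]
  refine ⟨(fun j => a (π j), p), ⟨he.perm_mem_dualBall ha π, ?_, ?_, ?_, ?_⟩, ?_⟩
  · intro i j hij
    change |a (π j)| ≤ |a (π i)|
    rcases le_or_gt m j with h | h
    · rw [haπ j h, abs_zero]
      exact abs_nonneg _
    · have hi : i < m := hij.trans_lt h
      have h1 := hmono (show (⟨i, hi⟩ : Fin m) ≤ ⟨j, h⟩ from hij)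
      have h2 := hπ' ⟨i, hi⟩
      have h3 := hπ' ⟨j, h⟩
      simp only at h2 h3
      rw [h2, h3]
      simpa [Function.comp_def] using h1
  · intro j
    change p j ∈ _
    rcases le_or_gt m j with h | h
    · rw [hp2 j h, mem_closedBall_zero_iff]
      simpa using hR0
    · refine mem_closedBall_of_openBox hR ?_ ?_
      · rw [hp1 ⟨j, h⟩]
        exact (hT _).2
      · simpa [p, h] using huv (σ ⟨j, h⟩)
  · intro j
    change openBox (p j) ⊆ Ω
    rcases le_or_gt m j with h | h
    · rw [hp2 j h, hempty]
      exact Set.empty_subset _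
    · rw [hp1 ⟨j, h⟩]
      exact (hT _).2
  · intro i j hij
    change Disjoint (openBox (p i)) (openBox (p j))
    rcases le_or_gt m i with hi | hi
    · rw [hp2 i hi, hempty]
      exact Set.empty_disjoint _
    rcases le_or_gt m j with hj | hj
    · rw [hp2 j hj, hempty]
      exact Set.disjoint_empty _
    rw [hp1 ⟨i, hi⟩, hp1 ⟨j, hj⟩]
    refine hTd fun h => hij ?_
    simpa using σ.injective h
  · rw [pairing, tsum_eq_sum (s := Finset.range m) fun j hj => by
      change a (π j) * _ = 0
      rw [haπ j (by simpa using hj), zero_mul], Finset.sum_range]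
    simp only [hp1, hπ']
    rw [Equiv.sum_comp σ (fun j => a j * ∫ x in T j, f x), hav]
    exact hlt

theorem JFNorm_sub_le (he : IsSymmetricBasis e) {f g : (Fin d → ℝ) → ℝ} (hf : Integrable f)
    (hg : Integrable g) : JFNorm e Ω (fun x => f x - g x) ≤ JFNorm e Ω f + JFNorm e Ω g := by
  refine csSup_le ⟨_, 0, Fin.elim0, fun j => j.elim0, fun j => j.elim0, rfl⟩ ?_
  rintro _ ⟨m, T, hT, hTd, rfl⟩
  have h1 := le_csSup (bddAbove_JFNorm_set (Ω := Ω) he hf) ⟨m, T, hT, hTd, rfl⟩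
  have h2 := le_csSup (bddAbove_JFNorm_set (Ω := Ω) he hg) ⟨m, T, hT, hTd, rfl⟩
  refine le_trans (le_trans (le_of_eq ?_) (norm_sub_le _ _)) (add_le_add h1 h2)
  rw [← Finset.sum_sub_distrib]
  congr 1
  refine Finset.sum_congr rfl fun j _ => ?_
  rw [integral_sub hf.integrableOn hg.integrableOn, sub_smul]

end Functionals

/-! ### Failure of the lower estimate -/

/-- The lower `ℓ¹` estimate fails for functions integrable on the whole space and bounded in the
`JF` norm. -/
theorem no_ell_one_of_integrable {d : ℕ} (hd : 1 ≤ d) (Ω : Set (Fin d → ℝ))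
    (hΩb : Bornology.IsBounded Ω) {X : Type*} [NormedAddCommGroup X] [NormedSpace ℝ X]
    (hrefl : Function.Surjective (NormedSpace.inclusionInDoubleDual ℝ X))
    (e : ℕ → X) (he : IsSymmetricBasis e) (f : ℕ → (Fin d → ℝ) → ℝ) (hf : ∀ n, Integrable (f n))
    {c C : ℝ} (hc : 0 < c)
    (hlow : ∀ a : ℕ →₀ ℝ, c * (a.sum fun _ t => |t|) ≤
      JFNorm e Ω (fun x => a.sum fun n t => t * f n x))
    (hC : ∀ n, JFNorm e Ω (f n) ≤ C) : False := by
  classical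
  obtain ⟨R₀, hR₀⟩ := hΩb.subset_closedBall 0
  set R := max R₀ 0
  have hR : Ω ⊆ Metric.closedBall 0 R :=
    hR₀.trans (Metric.closedBall_subset_closedBall (le_max_left _ _))
  obtain ⟨s, hs, hsc⟩ := exists_subseq_cauchy hd he hrefl hf hC
  -- differences of consecutive terms are null on boxes, yet still satisfy a lower `ℓ¹` estimate
  set h : ℕ → (Fin d → ℝ) → ℝ := fun k x => f (s (2 * k)) x - f (s (2 * k + 1)) x with hh
  have hhi : ∀ k, Integrable (h k) := fun k => (hf _).sub (hf _)
  have hhC : ∀ k, JFNorm e Ω (h k) ≤ C + C := fun k =>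
    (JFNorm_sub_le he (hf _) (hf _)).trans (add_le_add (hC _) (hC _))
  have hh0 : ∀ p, openBox p ⊆ Ω →
      Tendsto (fun n => ∫ x in openBox p, h n x) atTop (𝓝 0) := by
    intro p hp
    obtain ⟨y, hy⟩ := cauchySeq_tendsto_of_complete (hsc p hp)
    have t1 : Tendsto (fun k : ℕ => 2 * k) atTop atTop :=
      tendsto_atTop_mono (fun k => by simp only [id]; omega) tendsto_id
    have t2 : Tendsto (fun k : ℕ => 2 * k + 1) atTop atTop :=
      tendsto_atTop_mono (fun k => by simp only [id]; omega) tendsto_id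
    have := (hy.comp t1).sub (hy.comp t2)
    rw [sub_self] at this
    refine this.congr fun k => ?_
    exact (integral_sub (hf _).integrableOn (hf _).integrableOn).symm
  have : CompactSpace (normingSet e Ω R) := isCompact_iff_compactSpace.1 (isCompact_normingSet he)
  obtain ⟨a, ha0, ha1, hac⟩ := exists_convex_comb_lt
    (fun n => (⟨fun q : normingSet e Ω R => pairing (h n) q.1,
      continuous_pairing he hrefl (hhi n)⟩ : C(normingSet e Ω R, ℝ))) (C + C)
    (fun n q => (abs_pairing_le he (hhi n) q.2).trans (hhC n))
    (fun q => tendsto_pairing he hrefl hhi hhC hh0 q.2) hc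
  -- the same convex combination of the differences, written in terms of the `f n`
  set b : ℕ →₀ ℝ := Finsupp.mapDomain (fun k => s (2 * k)) a
    - Finsupp.mapDomain (fun k => s (2 * k + 1)) a with hb
  have hlin : ∀ w : ℕ → ℝ, (b.sum fun n t => t * w n)
      = a.sum fun n t => t * (w (s (2 * n)) - w (s (2 * n + 1))) := by
    intro w
    have e1 : ∀ (b : ℕ →₀ ℝ) (w : ℕ → ℝ),
        (b.sum fun n t => t * w n) = Finsupp.linearCombination ℝ w b := by
      intro b w; simp [Finsupp.linearCombination_apply]
    rw [e1, hb, map_sub, Finsupp.linearCombination_mapDomain, Finsupp.linearCombination_mapDomain,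
      ← e1, ← e1, ← Finsupp.sum_sub]
    simp [mul_sub]
  have hb1 : 2 ≤ b.sum fun _ t => |t| := by
    -- test `b` against signs separating the even from the odd terms of the subsequence
    set w : ℕ → ℝ := fun n => if ∃ k, n = s (2 * k) then 1 else -1 with hw
    have w1 : ∀ k, w (s (2 * k)) = 1 := fun k => if_pos ⟨k, rfl⟩
    have w2 : ∀ k, w (s (2 * k + 1)) = -1 := fun k => if_neg (by
      rintro ⟨l, hl⟩
      have := hs.injective hl
      omega)
    have h2 : (b.sum fun n t => t * w n) = 2 := by
      rw [hlin]
      simp only [w1, w2]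
      norm_num
      rw [← Finsupp.sum_mul, ha1, one_mul]
    rw [← h2]
    refine Finset.sum_le_sum fun n _ => ?_
    refine (le_abs_self _).trans (le_of_eq ?_)
    rw [abs_mul]
    have : |w n| = 1 := by
      simp only [hw]; split_ifs <;> simp
    rw [this, mul_one]
  have hbig : c < JFNorm e Ω (fun x => a.sum fun n t => t * h n x) := by
    have h1 := hlow b
    simp only [fun x => hlin (fun n => f n x)] at h1
    have h2 := mul_le_mul_of_nonneg_left hb1 hc.le
    have h3 := h2.trans h1
    exact lt_of_lt_of_le (by linarith) h3
  obtain ⟨q, hq, hlt⟩ := exists_lt_pairing hd he (le_max_right R₀ 0) hR hbig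
  rw [pairing_finsupp_sum he hhi a hq] at hlt
  refine lt_irrefl c (hlt.trans (lt_of_le_of_lt ?_ (hac ⟨q, hq⟩)))
  exact Finset.sum_le_sum fun n _ => mul_le_mul_of_nonneg_left (le_abs_self _) (ha0 n)

/-- The `JF` norm depends only on the restriction of the function to `Ω`. -/
theorem JFNorm_congr {d : ℕ} {Ω : Set (Fin d → ℝ)} {X : Type*} [NormedAddCommGroup X]
    [NormedSpace ℝ X] {e : ℕ → X} {f g : (Fin d → ℝ) → ℝ} (h : Set.EqOn f g Ω) :
    JFNorm e Ω f = JFNorm e Ω g := by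
  have key : ∀ {f g : (Fin d → ℝ) → ℝ}, Set.EqOn f g Ω → ∀ r, (∃ (m : ℕ)
      (T : Fin m → Set (Fin d → ℝ)), (∀ j, IsOpenParallelepiped (T j) ∧ T j ⊆ Ω) ∧
      (Pairwise fun i j => Disjoint (T i) (T j)) ∧
      r = ‖∑ j : Fin m, (∫ x in T j, f x) • e (j : ℕ)‖) → (∃ (m : ℕ)
      (T : Fin m → Set (Fin d → ℝ)), (∀ j, IsOpenParallelepiped (T j) ∧ T j ⊆ Ω) ∧
      (Pairwise fun i j => Disjoint (T i) (T j)) ∧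
      r = ‖∑ j : Fin m, (∫ x in T j, g x) • e (j : ℕ)‖) := by
    rintro f g h _ ⟨m, T, hT, hTd, rfl⟩
    refine ⟨m, T, hT, hTd, ?_⟩
    congr 1
    refine Finset.sum_congr rfl fun j _ => ?_
    obtain ⟨p, hp⟩ := (hT j).1.eq_openBox
    rw [setIntegral_congr_fun (by rw [hp]; exact measurableSet_openBox p) (h.mono (hT j).2)]
  unfold JFNorm
  congr 1
  ext r
  exact ⟨key h r, key h.symm r⟩

/-- For `d ≥ 1`, `Ω` a bounded open subset of `ℝ^d` and `X` a reflexive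
real Banach space with a normalized 1-symmetric basis `(e_n)`, no sequence of integrable
functions on `Ω` is equivalent to the unit vector basis of `ℓ¹` for the `JF_X(Ω)` norm;
hence `ℓ¹` does not embed isomorphically into `JF_X(Ω)`. -/
theorem ell_one_does_not_embed_in_JFX {d : ℕ} (hd : 1 ≤ d)
    (Ω : Set (Fin d → ℝ)) (hΩo : IsOpen Ω) (hΩb : Bornology.IsBounded Ω)
    {X : Type*} [NormedAddCommGroup X] [NormedSpace ℝ X] [CompleteSpace X]
    (hrefl : Function.Surjective (NormedSpace.inclusionInDoubleDual ℝ X))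
    (e : ℕ → X) (he : IsSymmetricBasis e) :
    ¬ ∃ (f : ℕ → (Fin d → ℝ) → ℝ) (c C : ℝ),
        (∀ n, IntegrableOn (f n) Ω) ∧ 0 < c ∧ c ≤ C ∧
        ∀ a : ℕ →₀ ℝ,
          c * (a.sum fun _ t => |t|) ≤
              JFNorm e Ω (fun x => a.sum fun n t => t * f n x) ∧
          JFNorm e Ω (fun x => a.sum fun n t => t * f n x) ≤
              C * (a.sum fun _ t => |t|) := by
  classical
  rintro ⟨f, c, C, hf, hc, -, hfC⟩
  -- replace each `f n` by its extension by zero, which is integrable on the whole space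
  have hcongr : ∀ a : ℕ →₀ ℝ, JFNorm e Ω (fun x => a.sum fun n t => t * Ω.indicator (f n) x)
      = JFNorm e Ω (fun x => a.sum fun n t => t * f n x) := fun a =>
    JFNorm_congr fun x hx => by simp [hx]
  refine no_ell_one_of_integrable hd Ω hΩb hrefl e he (fun n => Ω.indicator (f n))
    (fun n => (hf n).integrable_indicator hΩo.measurableSet) hc
    (fun a => by rw [hcongr]; exact (hfC a).1) (C := C) fun n => ?_
  have h := (hfC (Finsupp.single n 1)).2
  rw [← hcongr] at h
  simpa using h

end
end

section
/- Let d ≥ 1, let Ω be a bounded open subset of ℝ^d, and let X be a reflexive real Banach space with a normalized 1-symmetric basis (e_n). If (f_n) is a weakly null sequence in L¹(Ω) (i.e. ∫_Ω f_n g dμ → 0 for every g ∈ L^∞(Ω)), then ‖f_n‖_{JF_X(Ω)} → 0. Hence the formal identity from L¹(Ω) to JF_X(Ω) is a Dunford–Pettis operator. -/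
/-!
Two facts, one about `X` and one about `L¹(Ω)`, combine to give the result.

*The basis.* If `X` is reflexive, a symmetric basis `e` is weakly null: a weak limit `x` of `e`
along a nonprincipal ultrafilter exists, and comparing a functional `φ` with the functional
obtained by flipping the signs of its values on a tail of the basis (`IsSymmetricBasis.exists_flip`)
shows `φ x = -φ x`. Separating `0` from the convex hull of the basis and averaging over cyclic
shifts gives, for each `ε > 0`, an `N` with `‖e_0 + ⋯ + e_{N-1}‖ ≤ ε N`
(`IsSymmetricBasis.exists_norm_sum_le`). Cutting the decreasing rearrangement of a coefficient
sequence `a` into blocks of length `N` then yields `‖∑ a_j e_j‖ ≤ ε (N max |a_j| + ∑ |a_j|)`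
(`IsSymmetricBasis.norm_sum_le_greedy`).

*The functions.* The Baire category theorem in `{g ∈ L¹ : 0 ≤ g ≤ 1}` (`exists_ball_of_weaklyNull`)
shows that a weakly null sequence is eventually bounded in `L¹` (`exists_integral_abs_le`) and
equi-integrable (`exists_forall_setIntegral_le`). Boxes inside a bounded set form a totally bounded
family for the measure of the symmetric difference, so the integrals of `f_n` over boxes tend to
zero uniformly (`exists_forall_box_integral_le`).

With `a_j = ∫_{T_j} f_n` the sum `∑ |a_j|` is at most `‖f_n‖₁ ≤ C`, while `N max |a_j| ≤ 1` for
large `n`, so the `JF_X` norm is eventually at most `ε (1 + C)`.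
-/

open MeasureTheory

noncomputable section

/-! ### Symmetric bases of reflexive spaces -/

section Banach

variable {X : Type*} [NormedAddCommGroup X] [NormedSpace ℝ X]

lemma IsSymmetricBasis.norm_sum {e : ℕ → X} (he : IsSymmetricBasis e) {ι : Type*} (s : Finset ι)
    (w : ι → ℝ) (k : ι → ℕ) (π : Equiv.Perm ℕ) (ε : ℕ → ℝ) (hε : ∀ n, ε n = 1 ∨ ε n = -1) :
    ‖∑ i ∈ s, (ε (k i) * w i) • e (π (k i))‖ = ‖∑ i ∈ s, w i • e (k i)‖ := by
  have h := he.2.2 (∑ i ∈ s, Finsupp.single (k i) (w i)) π ε hε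
  have h1 : ∀ a : ℕ →₀ ℝ, (a.sum fun n c => (ε n * c) • e (π n))
      = Finsupp.linearCombination ℝ (fun n => ε n • e (π n)) a := by
    intro a
    rw [Finsupp.linearCombination_apply]
    refine Finsupp.sum_congr fun n _ => ?_
    rw [smul_smul, mul_comm]
  have h2 : ∀ a : ℕ →₀ ℝ, (a.sum fun n c => c • e n) = Finsupp.linearCombination ℝ e a :=
    fun a => (Finsupp.linearCombination_apply ..).symm
  rw [h1, h2, map_sum, map_sum] at h
  simpa only [Finsupp.linearCombination_single, smul_smul, mul_comm] using h

lemma IsSymmetricBasis.norm_sum_perm_s3 {e : ℕ → X} (he : IsSymmetricBasis e) {ι : Type*}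
    (s : Finset ι) (w : ι → ℝ) (k : ι → ℕ) (π : Equiv.Perm ℕ) :
    ‖∑ i ∈ s, w i • e (π (k i))‖ = ‖∑ i ∈ s, w i • e (k i)‖ := by
  simpa using he.norm_sum s w k π (fun _ => 1) (fun _ => Or.inl rfl)

lemma IsSymmetricBasis.norm_sum_sign {e : ℕ → X} (he : IsSymmetricBasis e) (s : Finset ℕ)
    (w ε : ℕ → ℝ) (hε : ∀ n, ε n = 1 ∨ ε n = -1) :
    ‖∑ i ∈ s, (ε i * w i) • e i‖ = ‖∑ i ∈ s, w i • e i‖ := by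
  simpa using he.norm_sum s w id 1 ε hε

lemma IsSymmetricBasis.linearIndependent {e : ℕ → X} (he : IsSymmetricBasis e) :
    LinearIndependent ℝ e := by
  rw [linearIndependent_iff']
  intro s g hg k hk
  -- flipping the sign of the `k`-th coefficient changes the sum by `2 g_k e_k`
  have h := he.norm_sum_sign s g (fun n => if n = k then -1 else 1) (fun n => by grind)
  rw [hg, norm_zero, norm_eq_zero] at h
  have h2 : ∑ i ∈ s, g i • e i - ∑ i ∈ s, ((if i = k then (-1 : ℝ) else 1) * g i) • e i
      = (2 * g k) • e k := by
    rw [← Finset.sum_sub_distrib, Finset.sum_eq_single k]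
    · simp only [if_true, ← sub_smul]; ring_nf
    · intro b _ hb; simp [hb]
    · exact fun h => absurd hk h
  rw [hg, h, sub_zero, eq_comm, smul_eq_zero] at h2
  rcases h2 with h2 | h2
  · linarith
  · have := he.1 k
    rw [h2, norm_zero] at this
    norm_num at this

/-- Flipping the signs of the coordinates of index `≥ N` of a functional does not increase its
norm. -/
lemma IsSymmetricBasis.exists_flip {e : ℕ → X} (he : IsSymmetricBasis e) (φ : StrongDual ℝ X)
    (N : ℕ) : ∃ ψ : StrongDual ℝ X, ‖ψ‖ ≤ ‖φ‖ ∧ (∀ n < N, ψ (e n) = φ (e n)) ∧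
      ∀ n, N ≤ n → ψ (e n) = -φ (e n) := by
  set b := Module.Basis.span he.linearIndependent with hb
  set ε : ℕ → ℝ := fun n => if n < N then 1 else -1 with hε
  have hbe : ∀ n, (b n : X) = e n := fun n => by
    rw [hb, Module.Basis.span_apply]
  set ψ₀ : Submodule.span ℝ (Set.range e) →ₗ[ℝ] ℝ := b.constr ℝ fun n => ε n * φ (e n) with hψ₀
  have hbound : ∀ x, ‖ψ₀ x‖ ≤ ‖φ‖ * ‖x‖ := by
    intro x
    have hx : (x : X) = ∑ i ∈ (b.repr x).support, b.repr x i • e i := by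
      conv_lhs => rw [← b.linearCombination_repr x, Finsupp.linearCombination_apply, Finsupp.sum]
      simp [hbe]
    have hψ : ψ₀ x = φ (∑ i ∈ (b.repr x).support, (ε i * b.repr x i) • e i) := by
      rw [hψ₀, Module.Basis.constr_apply, Finsupp.sum, map_sum]
      refine Finset.sum_congr rfl fun i _ => ?_
      simp only [map_smul, smul_eq_mul]; ring
    rw [hψ]
    refine (φ.le_opNorm _).trans (le_of_eq ?_)
    rw [he.norm_sum_sign _ _ ε (fun n => by grind), ← hx, Submodule.norm_coe]
  obtain ⟨ψ, hψ, hψn⟩ := exists_extension_norm_eq (Submodule.span ℝ (Set.range e))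
    (ψ₀.mkContinuous _ hbound)
  have key : ∀ n, ψ (e n) = ε n * φ (e n) := by
    intro n
    have := hψ (b n)
    rw [hbe] at this
    rw [this, LinearMap.mkContinuous_apply, hψ₀, Module.Basis.constr_basis]
  refine ⟨ψ, hψn ▸ LinearMap.mkContinuous_norm_le _ (norm_nonneg _) _, fun n hn => ?_,
    fun n hn => ?_⟩
  · rw [key]; simp [hε, hn]
  · rw [key]; simp [hε, not_lt.2 hn]

/-- In a reflexive space no functional is bounded below on the basis by a positive constant,
since the basis is weakly null along a nonprincipal ultrafilter. -/
lemma IsSymmetricBasis.not_forall_le {e : ℕ → X} (he : IsSymmetricBasis e)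
    (hrefl : Function.Surjective (NormedSpace.inclusionInDoubleDual ℝ X))
    (φ : StrongDual ℝ X) {c : ℝ} (hc : 0 < c) (h : ∀ n, c ≤ φ (e n)) : False := by
  -- a weak limit `x` of `e` along an ultrafilter
  obtain ⟨x, hx⟩ : ∃ x : X, ∀ ψ : StrongDual ℝ X,
      Filter.Tendsto (fun n => ψ (e n)) (Filter.hyperfilter ℕ : Filter ℕ) (nhds (ψ x)) := by
    set u : ℕ → WeakDual ℝ (StrongDual ℝ X) := fun n =>
      StrongDual.toWeakDual (NormedSpace.inclusionInDoubleDual ℝ X (e n)) with hu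
    have hK := WeakDual.isCompact_closedBall (𝕜 := ℝ) (E := StrongDual ℝ X) 0 1
    obtain ⟨Φ, -, hΦ⟩ := hK.ultrafilter_le_nhds ((Filter.hyperfilter ℕ).map u) (by
      rw [Filter.le_principal_iff, Ultrafilter.coe_map, Filter.mem_map]
      refine Filter.Eventually.of_forall fun n => ?_
      simp only [Set.mem_preimage, Metric.mem_closedBall, dist_zero_right]
      exact (NormedSpace.double_dual_bound ℝ X (e n)).trans (he.1 n).le)
    obtain ⟨x, hx⟩ := hrefl (WeakDual.toStrongDual Φ)
    refine ⟨x, fun ψ => ?_⟩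
    have h1 : Filter.Tendsto u (Filter.hyperfilter ℕ : Filter ℕ) (nhds Φ) := hΦ
    have h2 := ((WeakDual.eval_continuous ψ).tendsto Φ).comp h1
    have h3 : Φ ψ = ψ x := by
      have := congrArg (fun F => F ψ) hx
      simpa using this.symm
    rw [← h3]
    exact h2
  have hcx : c ≤ φ x := ge_of_tendsto (hx φ) (Filter.Eventually.of_forall h)
  -- approximate `x` by a finite combination and flip the signs beyond its support
  have hφ : 0 < ‖φ‖ := by
    rw [norm_pos_iff]
    rintro rfl
    have := h 0
    simp at this
    linarith
  obtain ⟨y, hy, hxy⟩ := Metric.mem_closure_iff.1 (he.2.1 x) (c / (2 * ‖φ‖)) (by positivity)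
  obtain ⟨a, rfl⟩ := (Finsupp.mem_span_range_iff_exists_finsupp).1 hy
  obtain ⟨N, hN⟩ := a.support.exists_nat_subset_range
  obtain ⟨ψ, hψn, hψ1, hψ2⟩ := he.exists_flip φ N
  have hψx : ψ x = -φ x := by
    refine tendsto_nhds_unique (hx ψ) ((hx φ).neg.congr' ?_)
    have hev : ∀ᶠ n in (Filter.hyperfilter ℕ : Filter ℕ), N ≤ n :=
      (Nat.cofinite_eq_atTop ▸ Filter.hyperfilter_le_cofinite) (Filter.eventually_ge_atTop N)
    filter_upwards [hev] with n hn
    exact (hψ2 n hn).symm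
  set y := a.sum fun i c => c • e i with hy
  have hψy : ψ y = φ y := by
    rw [hy, Finsupp.sum, map_sum, map_sum]
    refine Finset.sum_congr rfl fun i hi => ?_
    rw [map_smul, map_smul, hψ1 i (Finset.mem_range.1 (hN hi))]
  rw [dist_eq_norm] at hxy
  have b1 : |ψ (x - y)| < c / 2 := by
    have := ψ.le_opNorm (x - y)
    rw [Real.norm_eq_abs] at this
    calc _ ≤ ‖φ‖ * ‖x - y‖ := this.trans (by gcongr)
      _ < ‖φ‖ * (c / (2 * ‖φ‖)) := by gcongr
      _ = c / 2 := by field_simp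
  have b2 : |φ (x - y)| < c / 2 := by
    have := φ.le_opNorm (x - y)
    rw [Real.norm_eq_abs] at this
    calc _ ≤ ‖φ‖ * ‖x - y‖ := this
      _ < ‖φ‖ * (c / (2 * ‖φ‖)) := by gcongr
      _ = c / 2 := by field_simp
  rw [map_sub] at b1 b2
  rw [abs_lt] at b1 b2
  linarith [b1.1, b1.2, b2.1, b2.2]

/-- The fundamental function of a symmetric basis of a reflexive space is not bounded below by a
linear function. -/
lemma IsSymmetricBasis.exists_norm_sum_le {e : ℕ → X} (he : IsSymmetricBasis e)
    (hrefl : Function.Surjective (NormedSpace.inclusionInDoubleDual ℝ X))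
    {ε : ℝ} (hε : 0 < ε) : ∃ N : ℕ, 0 < N ∧ ‖∑ j ∈ Finset.range N, e j‖ ≤ ε * N := by
  -- a convex combination of the basis of small norm, by separation
  obtain ⟨x, hx, hxε⟩ : ∃ x ∈ convexHull ℝ (Set.range e), ‖x‖ < ε := by
    by_contra! hcon
    have hd : Disjoint (Metric.ball (0 : X) ε) (convexHull ℝ (Set.range e)) := by
      rw [Set.disjoint_left]
      intro x h1 h2
      rw [mem_ball_zero_iff] at h1
      exact absurd (hcon x h2) (not_le.2 h1)
    obtain ⟨φ, u, h1, h2⟩ := geometric_hahn_banach_open (convex_ball 0 ε) Metric.isOpen_ball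
      (convex_convexHull ℝ _) hd
    have hu : 0 < u := by simpa using h1 0 (Metric.mem_ball_self hε)
    exact he.not_forall_le hrefl φ hu fun n => h2 _ (subset_convexHull ℝ _ ⟨n, rfl⟩)
  obtain ⟨ι, _, w, z, hw0, hw1, hz, rfl⟩ := mem_convexHull_iff_exists_fintype.1 hx
  choose k hk using hz
  obtain ⟨N, hN⟩ := (Finset.univ.image k).exists_nat_subset_range
  have hkN : ∀ i, k i < N + 1 := fun i =>
    (Finset.mem_range.1 (hN (Finset.mem_image_of_mem k (Finset.mem_univ i)))).trans N.lt_succ_self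
  refine ⟨N + 1, N.succ_pos, ?_⟩
  -- average over the cyclic shifts of `{0, …, N}`
  have hrot : ∀ s : Fin (N + 1), ∃ g : Equiv.Perm ℕ,
      ∀ j : Fin (N + 1), g j = ((j + s : Fin (N + 1)) : ℕ) := by
    intro s
    have := (Equiv.Perm.isMultiplyPretransitive ℕ (N + 1)).exists_smul_eq
      (⟨fun j : Fin (N + 1) => (j : ℕ), Fin.val_injective⟩ : Fin (N + 1) ↪ ℕ)
      ⟨fun j : Fin (N + 1) => ((j + s : Fin (N + 1)) : ℕ),
        Fin.val_injective.comp (add_left_injective s)⟩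
    obtain ⟨g, hg⟩ := this
    exact ⟨g, fun j => DFunLike.congr_fun hg j⟩
  choose g hg using hrot
  have hsum : ∑ j ∈ Finset.range (N + 1), e j
      = ∑ s : Fin (N + 1), ∑ i, w i • e (g s (k i)) := by
    rw [Finset.sum_comm]
    have : ∀ i, ∑ s : Fin (N + 1), w i • e (g s (k i)) = w i • ∑ j ∈ Finset.range (N + 1), e j := by
      intro i
      rw [← Finset.smul_sum, Finset.sum_range]
      congr 1
      have h1 : ∀ s, g s (k i) = (((⟨k i, hkN i⟩ : Fin (N + 1)) + s : Fin (N + 1)) : ℕ) :=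
        fun s => hg s ⟨k i, hkN i⟩
      simp only [h1]
      exact Equiv.sum_comp (Equiv.addLeft (⟨k i, hkN i⟩ : Fin (N + 1))) fun s => e (s : ℕ)
    rw [Finset.sum_congr rfl fun i _ => this i, ← Finset.sum_smul, hw1, one_smul]
  rw [hsum]
  calc _ ≤ ∑ s : Fin (N + 1), ‖∑ i, w i • e (g s (k i))‖ := norm_sum_le _ _
    _ ≤ ∑ s : Fin (N + 1), ε := by
      refine Finset.sum_le_sum fun s _ => ?_
      rw [he.norm_sum_perm_s3]
      simpa only [hk] using hxε.le
    _ = ε * ((N + 1 : ℕ) : ℝ) := by simp [mul_comm]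

/-- Coefficients supported on at most `N` indices and bounded by `δ` are dominated by the vector
`δ (e_0 + ⋯ + e_{N-1})`. -/
lemma IsSymmetricBasis.norm_sum_le_of_card_le {e : ℕ → X} (he : IsSymmetricBasis e) {N : ℕ}
    (A : Finset ℕ) (hA : A.card ≤ N) (a : ℕ → ℝ) {δ : ℝ} (ha : ∀ j ∈ A, |a j| ≤ δ) (hδ : 0 ≤ δ) :
    ‖∑ j ∈ A, a j • e j‖ ≤ δ * ‖∑ j ∈ Finset.range N, e j‖ := by
  obtain ⟨B, hAB, hB⟩ := Infinite.exists_superset_card_eq A N hA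
  -- the convex function `y ↦ ‖∑ y_j e_j‖` on the cube is maximal at a vertex
  set F : (B → ℝ) → ℝ := fun y => ‖∑ j, y j • e j‖ with hF
  have hconv : ConvexOn ℝ Set.univ F := by
    let L : (B → ℝ) →ₗ[ℝ] X := Fintype.linearCombination ℝ (fun j : B => e j)
    exact (convexOn_norm (convex_univ (𝕜 := ℝ) (E := X))).comp_linearMap L
  have hmem : (fun j : B => if (j : ℕ) ∈ A then a j else 0) ∈
      convexHull ℝ (Set.univ.pi fun _ : B => ({-δ, δ} : Set ℝ)) := by
    refine mem_convexHull_pi fun j _ => ?_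
    rw [convexHull_pair, segment_eq_Icc (by linarith)]
    split_ifs with h
    · exact abs_le.1 (ha j h)
    · exact ⟨by linarith, hδ⟩
  obtain ⟨y, hy, hle⟩ := hconv.exists_ge_of_mem_convexHull (Set.subset_univ _) hmem
  have h1 : ∑ j ∈ A, a j • e j = ∑ j : B, (if (j : ℕ) ∈ A then a j else 0) • e j := by
    rw [Finset.sum_coe_sort B (fun j => (if j ∈ A then a j else 0) • e j)]
    simp only [ite_smul, zero_smul]
    rw [← Finset.sum_filter, Finset.filter_mem_eq_inter, Finset.inter_eq_right.2 hAB]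
  rw [h1]
  refine hle.trans (le_of_eq ?_)
  set σ : ℕ → ℝ := fun n => if h : n ∈ B then (if y ⟨n, h⟩ = δ then 1 else -1) else 1 with hσ
  have h2 : F y = ‖∑ j ∈ B, (σ j * δ) • e j‖ := by
    rw [← Finset.sum_coe_sort B]
    refine congrArg norm (Finset.sum_congr rfl fun j _ => ?_)
    congr 1
    have : y j = -δ ∨ y j = δ := by simpa using hy j (Set.mem_univ _)
    simp only [hσ, j.2, dif_pos]
    split_ifs with h
    · rw [h, one_mul]
    · rcases this with h' | h'
      · rw [h']; ring
      · exact absurd h' h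
  rw [h2, he.norm_sum_sign B (fun _ => δ) σ (fun n => by grind)]
  rw [← Finset.smul_sum, norm_smul, Real.norm_of_nonneg hδ]
  congr 1
  -- all sets of `N` indices are equivalent under permutations
  obtain ⟨g, hg⟩ := (Equiv.Perm.isMultiplyPretransitive ℕ N).exists_smul_eq
      (⟨fun j : Fin N => (j : ℕ), Fin.val_injective⟩ : Fin N ↪ ℕ)
      (B.orderEmbOfFin hB).toEmbedding
  have hg' : ∀ j : Fin N, g j = B.orderEmbOfFin hB j := fun j => DFunLike.congr_fun hg j
  have h3 : ∑ j ∈ B, e j = ∑ j : Fin N, (1 : ℝ) • e (g j) := by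
    simp only [hg', one_smul]
    rw [← Finset.sum_coe_sort B, ← Equiv.sum_comp (B.orderIsoOfFin hB).toEquiv]
    rfl
  rw [h3, he.norm_sum_perm_s3, Finset.sum_range]
  simp

lemma exists_top_subset (a : ℕ → ℝ) (S : Finset ℕ) (N : ℕ) (h : N ≤ S.card) :
    ∃ A ⊆ S, A.card = N ∧ ∀ i ∈ A, ∀ j ∈ S \ A, a j ≤ a i := by
  induction N with
  | zero => exact ⟨∅, by simp, by simp, by simp⟩
  | succ N ih =>
    obtain ⟨A, hA, hc, hm⟩ := ih (by omega)
    have hne : (S \ A).Nonempty := by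
      rw [← Finset.card_pos, Finset.card_sdiff_of_subset hA]; omega
    obtain ⟨k, hk, hmax⟩ := Finset.exists_max_image (S \ A) a hne
    have hk' := Finset.mem_sdiff.1 hk
    refine ⟨insert k A, ?_, ?_, ?_⟩
    · exact Finset.insert_subset hk'.1 hA
    · rw [Finset.card_insert_of_notMem hk'.2, hc]
    · intro i hi j hj
      have hjA : j ∈ S \ A := by grind
      rcases Finset.mem_insert.1 hi with rfl | hi
      · exact hmax j hjA
      · exact hm i hi j hjA

/-- Greedy blocking: the decreasing rearrangement of `a` is cut into blocks of length `N`, and each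
block is dominated by the average of the preceding one. -/
lemma IsSymmetricBasis.norm_sum_le_greedy {e : ℕ → X} (he : IsSymmetricBasis e) {N : ℕ}
    (hN : 0 < N) {ε : ℝ} (hNε : ‖∑ j ∈ Finset.range N, e j‖ ≤ ε * N) (a : ℕ → ℝ) :
    ∀ (S : Finset ℕ) (δ : ℝ), 0 ≤ δ → (∀ j ∈ S, |a j| ≤ δ) →
      ‖∑ j ∈ S, a j • e j‖ ≤ ε * (N * δ + ∑ j ∈ S, |a j|) := by
  have hN' : (0 : ℝ) < N := by exact_mod_cast hN
  have hε : 0 ≤ ε := nonneg_of_mul_nonneg_left ((norm_nonneg _).trans hNε) hN'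
  intro S
  induction S using Finset.strongInduction with
  | H S ih =>
  intro δ hδ hS
  rcases le_or_gt S.card N with hc | hc
  · calc _ ≤ δ * ‖∑ j ∈ Finset.range N, e j‖ := he.norm_sum_le_of_card_le S hc a hS hδ
      _ ≤ δ * (ε * N) := by gcongr
      _ = ε * (N * δ + 0) := by ring
      _ ≤ _ := by gcongr; exact Finset.sum_nonneg fun _ _ => abs_nonneg _
  · obtain ⟨A, hAS, hA, hm⟩ := exists_top_subset (fun j => |a j|) S N hc.le
    have hAne : A.Nonempty := by rw [← Finset.card_pos, hA]; exact hN
    obtain ⟨i, hi, himin⟩ := Finset.exists_min_image A (fun j => |a j|) hAne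
    have hrest := ih (S \ A) (Finset.sdiff_ssubset hAS hAne) |a i| (abs_nonneg _)
      (fun j hj => hm i hi j hj)
    have htop := he.norm_sum_le_of_card_le A hA.le a (fun j hj => hS j (hAS hj)) hδ
    have havg : N * |a i| ≤ ∑ j ∈ A, |a j| := by
      have := Finset.card_nsmul_le_sum A (fun j => |a j|) |a i| himin
      rwa [hA, nsmul_eq_mul] at this
    rw [← Finset.sum_sdiff hAS, ← Finset.sum_sdiff hAS (f := fun j => |a j|)]
    calc _ ≤ _ := norm_add_le _ _
      _ ≤ ε * (N * |a i| + ∑ j ∈ S \ A, |a j|) + δ * (ε * N) :=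
        add_le_add hrest (htop.trans (by gcongr))
      _ ≤ ε * (∑ j ∈ A, |a j| + ∑ j ∈ S \ A, |a j|) + δ * (ε * N) := by gcongr
      _ = _ := by ring

end Banach

/-! ### Weakly null sequences in `L¹` -/

section WeaklyNull

variable {α : Type*} [MeasurableSpace α] {ν : Measure α}

lemma integrable_mul_of_mem_Icc {f g : α → ℝ} (hf : Integrable f ν) (hg : Measurable g)
    (hb : ∀ x, g x ∈ Set.Icc (0 : ℝ) 1) : Integrable (fun x => f x * g x) ν := by
  refine hf.mul_bdd (c := 1) hg.aestronglyMeasurable (Filter.Eventually.of_forall fun x => ?_)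
  rw [Real.norm_of_nonneg (hb x).1]
  exact (hb x).2

lemma integral_mul_indicator_one (f : α → ℝ) {B : Set α} (hB : MeasurableSet B) :
    ∫ x, f x * B.indicator 1 x ∂ν = ∫ x in B, f x ∂ν := by
  rw [← integral_indicator hB]
  congr 1
  ext x
  by_cases hx : x ∈ B <;> simp [hx]

variable [IsFiniteMeasure ν] {f : ℕ → α → ℝ}

/-- Baire category in the complete space `{g ∈ L¹ : 0 ≤ g ≤ 1}`: if `∫ f_n g → 0` for all bounded
`g`, then this convergence is uniform, up to `ε`, on some `L¹`-ball of this space. -/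
lemma exists_ball_of_weaklyNull (hint : ∀ n, Integrable (f n) ν)
    (hweak : ∀ g : α → ℝ, Measurable g → (∃ M, ∀ x, |g x| ≤ M) →
      Filter.Tendsto (fun n => ∫ x, f n x * g x ∂ν) Filter.atTop (nhds 0))
    {ε : ℝ} (hε : 0 < ε) :
    ∃ N : ℕ, ∃ r > 0, ∃ g₀ : α → ℝ, Measurable g₀ ∧ (∀ x, g₀ x ∈ Set.Icc (0 : ℝ) 1) ∧
      ∀ g : α → ℝ, Measurable g → (∀ x, g x ∈ Set.Icc (0 : ℝ) 1) →
        ∫ x, |g x - g₀ x| ∂ν < r → ∀ n ≥ N, |∫ x, f n x * g x ∂ν| ≤ ε := by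
  have hone : MemLp (fun _ : α => (1 : ℝ)) 1 ν := memLp_const 1
  set K : Set (Lp ℝ 1 ν) := Set.Icc 0 (hone.toLp _) with hK
  have hKmem : ∀ u : Lp ℝ 1 ν, u ∈ K ↔ ∀ᵐ x ∂ν, u x ∈ Set.Icc (0 : ℝ) 1 := by
    intro u
    rw [hK, Set.mem_Icc, ← Lp.coeFn_le, ← Lp.coeFn_le]
    have h1 := hone.coeFn_toLp
    have h0 := Lp.coeFn_zero ℝ 1 ν
    constructor
    · rintro ⟨h2, h3⟩
      filter_upwards [h0, h1, h2, h3] with x h0 h1 h2 h3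
      rw [h0] at h2; rw [h1] at h3
      exact ⟨h2, h3⟩
    · intro h
      constructor
      · filter_upwards [h0, h] with x h0 h
        rw [h0]; exact h.1
      · filter_upwards [h1, h] with x h1 h
        rw [h1]; exact h.2
  -- every element of `K` has a measurable representative with values in `[0, 1]`
  have hrep : ∀ u ∈ K, ∃ g : α → ℝ, Measurable g ∧ (∀ x, g x ∈ Set.Icc (0 : ℝ) 1) ∧ u =ᵐ[ν] g := by
    intro u hu
    refine ⟨fun x => max 0 (min 1 (u x)), ?_, fun x => ?_, ?_⟩
    · have := (Lp.stronglyMeasurable u).measurable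
      fun_prop
    · exact ⟨le_max_left _ _, max_le zero_le_one (min_le_left _ _)⟩
    · filter_upwards [(hKmem u).1 hu] with x hx
      rw [min_eq_right hx.2, max_eq_right hx.1]
  have hKc : IsClosed K := isClosed_Icc
  have := hKc.completeSpace_coe
  have hne : Nonempty K := ⟨⟨0, (hKmem 0).2 (by
    filter_upwards [Lp.coeFn_zero ℝ 1 ν] with x hx
    rw [hx]; exact ⟨le_rfl, zero_le_one⟩)⟩⟩
  set F : ℕ → Set K := fun N => {u | ∀ n ≥ N, |∫ x, f n x * (u : Lp ℝ 1 ν) x ∂ν| ≤ ε} with hF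
  have hFc : ∀ N, IsClosed (F N) := by
    intro N
    refine IsSeqClosed.isClosed fun u v hu huv n hn => ?_
    have h1 : Filter.Tendsto (fun k => (u k : Lp ℝ 1 ν)) Filter.atTop (nhds (v : Lp ℝ 1 ν)) :=
      (continuous_subtype_val.tendsto v).comp huv
    obtain ⟨ns, -, hns⟩ := (tendstoInMeasure_of_tendsto_Lp h1).exists_seq_tendsto_ae
    have h2 : Filter.Tendsto (fun k => ∫ x, f n x * (u (ns k) : Lp ℝ 1 ν) x ∂ν) Filter.atTop
        (nhds (∫ x, f n x * (v : Lp ℝ 1 ν) x ∂ν)) := by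
      refine tendsto_integral_of_dominated_convergence (fun x => |f n x|) (fun k => ?_)
        (hint n).abs (fun k => ?_) ?_
      · exact (hint n).1.mul (Lp.aestronglyMeasurable _)
      · filter_upwards [(hKmem _).1 (u (ns k)).2] with x hx
        rw [Real.norm_eq_abs, abs_mul, abs_of_nonneg hx.1]
        exact mul_le_of_le_one_right (abs_nonneg _) hx.2
      · filter_upwards [hns] with x hx
        exact hx.const_mul _
    exact le_of_tendsto h2.abs (Filter.Eventually.of_forall fun k => hu (ns k) n hn)
  have hFu : ⋃ N, F N = Set.univ := by
    refine Set.eq_univ_of_forall fun u => ?_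
    obtain ⟨g, hgm, hgb, hug⟩ := hrep u u.2
    have h1 := hweak g hgm ⟨1, fun x => abs_le.2 ⟨by linarith [(hgb x).1], (hgb x).2⟩⟩
    obtain ⟨N, hN⟩ := Filter.eventually_atTop.1 (h1.abs.eventually_le_const (u := ε) (by simpa))
    refine Set.mem_iUnion.2 ⟨N, fun n hn => ?_⟩
    have : ∫ x, f n x * (u : Lp ℝ 1 ν) x ∂ν = ∫ x, f n x * g x ∂ν := by
      refine integral_congr_ae ?_
      filter_upwards [hug] with x hx
      rw [hx]
    rw [this]
    exact hN n hn
  obtain ⟨N, u₀, hu₀⟩ := nonempty_interior_of_iUnion_of_closed hFc hFu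
  obtain ⟨r, hr, hball⟩ := Metric.mem_nhds_iff.1 (mem_interior_iff_mem_nhds.1 hu₀)
  obtain ⟨g₀, hg₀m, hg₀b, hug₀⟩ := hrep u₀ u₀.2
  refine ⟨N, r, hr, g₀, hg₀m, hg₀b, fun g hgm hgb hgr n hn => ?_⟩
  have hgL : MemLp g 1 ν := MemLp.of_bound hgm.aestronglyMeasurable 1
    (Filter.Eventually.of_forall fun x => by
      rw [Real.norm_of_nonneg (hgb x).1]; exact (hgb x).2)
  have hgK : hgL.toLp g ∈ K := (hKmem _).2 (by
    filter_upwards [hgL.coeFn_toLp] with x hx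
    rw [hx]; exact hgb x)
  have hmem : (⟨hgL.toLp g, hgK⟩ : K) ∈ Metric.ball u₀ r := by
    rw [Metric.mem_ball, Subtype.dist_eq, dist_eq_norm, L1.norm_eq_integral_norm]
    refine lt_of_eq_of_lt (integral_congr_ae ?_) hgr
    filter_upwards [hgL.coeFn_toLp, hug₀, Lp.coeFn_sub (hgL.toLp g) (u₀ : Lp ℝ 1 ν)] with x h1 h2 h3
    rw [h3, Pi.sub_apply, h1, h2, Real.norm_eq_abs]
  have hfin := hball hmem n hn
  have : ∫ x, f n x * (hgL.toLp g) x ∂ν = ∫ x, f n x * g x ∂ν := by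
    refine integral_congr_ae ?_
    filter_upwards [hgL.coeFn_toLp] with x hx
    rw [hx]
  rwa [this] at hfin

/-- Equi-integrability (for the signed integrals) of a weakly null sequence. -/
lemma exists_forall_setIntegral_le (hint : ∀ n, Integrable (f n) ν)
    (hweak : ∀ g : α → ℝ, Measurable g → (∃ M, ∀ x, |g x| ≤ M) →
      Filter.Tendsto (fun n => ∫ x, f n x * g x ∂ν) Filter.atTop (nhds 0))
    {ε : ℝ} (hε : 0 < ε) :
    ∃ N : ℕ, ∃ r > 0, ∀ B : Set α, MeasurableSet B → ν.real B < r →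
      ∀ n ≥ N, |∫ x in B, f n x ∂ν| ≤ ε := by
  obtain ⟨N, r, hr, g₀, hg₀m, hg₀b, h⟩ := exists_ball_of_weaklyNull hint hweak (half_pos hε)
  refine ⟨N, r, hr, fun B hB hBr n hn => ?_⟩
  have hclose : ∀ g : α → ℝ, (∀ x, |g x - g₀ x| ≤ B.indicator 1 x) →
      ∫ x, |g x - g₀ x| ∂ν < r := by
    intro g hg
    refine lt_of_le_of_lt (integral_mono_of_nonneg (Filter.Eventually.of_forall fun x => abs_nonneg _)
      ((integrable_const (1 : ℝ)).indicator hB) (Filter.Eventually.of_forall hg)) ?_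
    rwa [integral_indicator hB, setIntegral_const, smul_eq_mul, mul_one]
  -- `1_B` is the difference of two perturbations of `g₀` supported in `B`
  set g₁ : α → ℝ := fun x => g₀ x + B.indicator 1 x * (1 - g₀ x) with hg₁
  set g₂ : α → ℝ := fun x => g₀ x - B.indicator 1 x * g₀ x with hg₂
  have hind : Measurable (B.indicator (1 : α → ℝ)) := measurable_one.indicator hB
  have hm₁ : Measurable g₁ := by fun_prop
  have hm₂ : Measurable g₂ := by fun_prop
  have hb₁ : ∀ x, g₁ x ∈ Set.Icc (0 : ℝ) 1 := by
    intro x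
    have := hg₀b x
    by_cases hx : x ∈ B <;> simp [hg₁, hx, this.1, this.2]
  have hb₂ : ∀ x, g₂ x ∈ Set.Icc (0 : ℝ) 1 := by
    intro x
    have := hg₀b x
    by_cases hx : x ∈ B <;> simp [hg₂, hx, this.1, this.2]
  have h1 := h g₁ hm₁ hb₁ (hclose g₁ fun x => by
    have := hg₀b x
    by_cases hx : x ∈ B <;> simp [hg₁, hx, abs_le]
    constructor <;> linarith [this.1, this.2]) n hn
  have h2 := h g₂ hm₂ hb₂ (hclose g₂ fun x => by
    have := hg₀b x
    by_cases hx : x ∈ B <;> simp [hg₂, hx, abs_le]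
    constructor <;> linarith [this.1, this.2]) n hn
  have hdiff : ∫ x in B, f n x ∂ν = ∫ x, f n x * g₁ x ∂ν - ∫ x, f n x * g₂ x ∂ν := by
    rw [← integral_mul_indicator_one _ hB, ← integral_sub
      (integrable_mul_of_mem_Icc (hint n) hm₁ hb₁) (integrable_mul_of_mem_Icc (hint n) hm₂ hb₂)]
    congr 1
    ext x
    simp only [hg₁, hg₂]
    ring
  rw [hdiff]
  rw [abs_le] at *
  constructor <;> linarith [h1.1, h1.2, h2.1, h2.2]

/-- A weakly null sequence is eventually bounded in `L¹`. -/
lemma exists_integral_abs_le (hint : ∀ n, Integrable (f n) ν)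
    (hweak : ∀ g : α → ℝ, Measurable g → (∃ M, ∀ x, |g x| ≤ M) →
      Filter.Tendsto (fun n => ∫ x, f n x * g x ∂ν) Filter.atTop (nhds 0)) :
    ∃ N : ℕ, ∃ C, ∀ n ≥ N, ∫ x, |f n x| ∂ν ≤ C := by
  obtain ⟨N, r, hr, g₀, hg₀m, hg₀b, h⟩ := exists_ball_of_weaklyNull hint hweak one_pos
  -- the ball around `g₀` contains `g₀ + t (g - g₀)` for every `g` with values in `[0, 1]`
  obtain ⟨t, ht0, ht1, htr⟩ : ∃ t : ℝ, 0 < t ∧ t ≤ 1 ∧ t * ν.real Set.univ < r := by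
    refine ⟨min 1 (r / (ν.real Set.univ + 1)), by positivity, min_le_left _ _, ?_⟩
    have h0 : 0 ≤ ν.real Set.univ := measureReal_nonneg
    calc _ ≤ r / (ν.real Set.univ + 1) * ν.real Set.univ := by gcongr; exact min_le_right _ _
      _ < r := by rw [div_mul_eq_mul_div, div_lt_iff₀ (by linarith)]; nlinarith
  have hunif : ∀ g : α → ℝ, Measurable g → (∀ x, g x ∈ Set.Icc (0 : ℝ) 1) → ∀ n ≥ N,
      |∫ x, f n x * g x ∂ν| ≤ 2 / t := by
    intro g hgm hgb n hn
    have h0 := h g₀ hg₀m hg₀b (by simpa using hr) n hn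
    have h1 := h (fun x => (1 - t) * g₀ x + t * g x) (by fun_prop) (fun x => by
        have h1 := hg₀b x
        have h2 := hgb x
        constructor <;> nlinarith [h1.1, h1.2, h2.1, h2.2]) (by
        refine lt_of_le_of_lt (integral_mono_of_nonneg
          (Filter.Eventually.of_forall fun x => abs_nonneg _) (integrable_const t)
          (Filter.Eventually.of_forall fun x => ?_)) ?_
        · have h1 := hg₀b x
          have h2 := hgb x
          dsimp only
          rw [abs_le]
          constructor <;> nlinarith [h1.1, h1.2, h2.1, h2.2]
        · rw [integral_const, smul_eq_mul, mul_comm]; exact htr) n hn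
    have hi0 := integrable_mul_of_mem_Icc (hint n) hg₀m hg₀b
    have hi1 := integrable_mul_of_mem_Icc (hint n) hgm hgb
    have heq : ∫ x, f n x * ((1 - t) * g₀ x + t * g x) ∂ν
        = (1 - t) * ∫ x, f n x * g₀ x ∂ν + t * ∫ x, f n x * g x ∂ν := by
      rw [← integral_const_mul, ← integral_const_mul,
        ← integral_add (hi0.const_mul _) (hi1.const_mul _)]
      congr 1
      ext x
      ring
    rw [heq] at h1
    rw [abs_le] at *
    constructor
    · rw [← neg_div, div_le_iff₀ ht0]
      nlinarith [h0.1, h0.2, h1.1, h1.2]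
    · rw [le_div_iff₀ ht0]
      nlinarith [h0.1, h0.2, h1.1, h1.2]
  refine ⟨N, 2 / t + 2 / t, fun n hn => ?_⟩
  set F := (hint n).1.mk (f n) with hF
  have hFm : Measurable F := (hint n).1.stronglyMeasurable_mk.measurable
  have hP : MeasurableSet {x | 0 ≤ F x} := measurableSet_le measurable_const hFm
  have hind : ∀ B : Set α, ∀ x, B.indicator (1 : α → ℝ) x ∈ Set.Icc (0 : ℝ) 1 := by
    intro B x
    by_cases hx : x ∈ B <;> simp [hx]
  have m1 : Measurable ({x | 0 ≤ F x}.indicator (1 : α → ℝ)) := measurable_one.indicator hP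
  have m2 : Measurable ({x | 0 ≤ F x}ᶜ.indicator (1 : α → ℝ)) := measurable_one.indicator hP.compl
  have h1 := hunif _ m1 (hind _) n hn
  have h2 := hunif _ m2 (hind _) n hn
  have heq : ∫ x, |f n x| ∂ν = ∫ x, f n x * {x | 0 ≤ F x}.indicator 1 x ∂ν
      - ∫ x, f n x * {x | 0 ≤ F x}ᶜ.indicator 1 x ∂ν := by
    rw [← integral_sub (integrable_mul_of_mem_Icc (hint n) m1 (hind _))
      (integrable_mul_of_mem_Icc (hint n) m2 (hind _))]
    refine integral_congr_ae ?_
    filter_upwards [(hint n).1.ae_eq_mk] with x hx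
    rw [← hF] at hx
    by_cases hx0 : 0 ≤ F x
    · simp [hx0, hx]
    · simp [hx0, hx, abs_of_neg (not_le.1 hx0)]
  rw [heq]
  rw [abs_le] at h1 h2
  linarith [h1.2, h2.1]

end WeaklyNull

/-! ### Uniformity over boxes -/

section Boxes

variable {d : ℕ}

/-- The box with lower corner `p.1` and upper corner `p.2`. -/
def cornerBox (p : (Fin d → ℝ) × (Fin d → ℝ)) : Set (Fin d → ℝ) :=
  Set.pi Set.univ fun i => Set.Ioo (p.1 i) (p.2 i)

lemma measurableSet_cornerBox (p : (Fin d → ℝ) × (Fin d → ℝ)) : MeasurableSet (cornerBox p) :=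
  MeasurableSet.univ_pi fun _ => measurableSet_Ioo

/-- A box depends continuously on its corners, away from its bounding hyperplanes. -/
lemma eventually_mem_cornerBox_iff (p : (Fin d → ℝ) × (Fin d → ℝ)) (x : Fin d → ℝ)
    (h1 : ∀ i, x i ≠ p.1 i) (h2 : ∀ i, x i ≠ p.2 i) :
    ∀ᶠ q in nhds p, x ∈ cornerBox q ↔ x ∈ cornerBox p := by
  have key : ∀ i, ∀ᶠ q : (Fin d → ℝ) × (Fin d → ℝ) in nhds p,
      x i ∈ Set.Ioo (q.1 i) (q.2 i) ↔ x i ∈ Set.Ioo (p.1 i) (p.2 i) := by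
    intro i
    have c1 : Filter.Tendsto (fun q : (Fin d → ℝ) × (Fin d → ℝ) => q.1 i) (nhds p) (nhds (p.1 i)) :=
      (Continuous.tendsto (by fun_prop) p)
    have c2 : Filter.Tendsto (fun q : (Fin d → ℝ) × (Fin d → ℝ) => q.2 i) (nhds p) (nhds (p.2 i)) :=
      (Continuous.tendsto (by fun_prop) p)
    have e1 : ∀ᶠ q : (Fin d → ℝ) × (Fin d → ℝ) in nhds p, q.1 i < x i ↔ p.1 i < x i := by
      rcases lt_or_gt_of_ne (h1 i) with h | h
      · filter_upwards [c1.eventually_const_lt h] with q hq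
        exact ⟨fun h' => absurd h' hq.not_gt, fun h' => absurd h' h.not_gt⟩
      · filter_upwards [c1.eventually_lt_const h] with q hq
        exact ⟨fun _ => h, fun _ => hq⟩
    have e2 : ∀ᶠ q : (Fin d → ℝ) × (Fin d → ℝ) in nhds p, x i < q.2 i ↔ x i < p.2 i := by
      rcases lt_or_gt_of_ne (h2 i) with h | h
      · filter_upwards [c2.eventually_const_lt h] with q hq
        exact ⟨fun _ => h, fun _ => hq⟩
      · filter_upwards [c2.eventually_lt_const h] with q hq
        exact ⟨fun h' => absurd h' hq.not_gt, fun h' => absurd h' h.not_gt⟩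
    filter_upwards [e1, e2] with q h1 h2
    rw [Set.mem_Ioo, Set.mem_Ioo, h1, h2]
  filter_upwards [Filter.eventually_all.2 key] with q hq
  simp only [cornerBox, Set.mem_univ_pi, hq]

/-- Up to small measure, boxes with corners in a compact set are finite in number. -/
lemma exists_finite_boxes (ν : Measure (Fin d → ℝ)) [IsFiniteMeasure ν]
    (hν : ν ≪ volume) {P : Set ((Fin d → ℝ) × (Fin d → ℝ))} (hP : IsCompact P)
    {r : ℝ} (hr : 0 < r) :
    ∃ t : Finset ((Fin d → ℝ) × (Fin d → ℝ)), ∀ p ∈ P, ∃ q ∈ t,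
      ν.real (cornerBox p \ cornerBox q) < r ∧ ν.real (cornerBox q \ cornerBox p) < r := by
  have hae : ∀ p : (Fin d → ℝ) × (Fin d → ℝ), ∀ᵐ x ∂ν, ∀ᶠ q in nhds p,
      x ∈ cornerBox q ↔ x ∈ cornerBox p := by
    intro p
    have h0 : ∀ (i : Fin d) (c : ℝ), ∀ᵐ x : Fin d → ℝ ∂ν, x i ≠ c := by
      intro i c
      refine hν.ae_le ?_
      rw [mem_ae_iff]
      simpa [Set.compl_def, volume_pi] using Measure.pi_hyperplane (fun _ : Fin d => (volume : Measure ℝ)) i c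
    filter_upwards [ae_all_iff.2 fun i => h0 i (p.1 i), ae_all_iff.2 fun i => h0 i (p.2 i)]
      with x h1 h2
    exact eventually_mem_cornerBox_iff p x h1 h2
  have hsmall : ∀ (p : (Fin d → ℝ) × (Fin d → ℝ))
      (A : (Fin d → ℝ) × (Fin d → ℝ) → Set (Fin d → ℝ)), (∀ q, MeasurableSet (A q)) →
      (∀ q x, (x ∈ cornerBox q ↔ x ∈ cornerBox p) → x ∉ A q) →
      ∀ᶠ q in nhds p, ν.real (A q) < r := by
    intro p A hA hAp
    have := tendsto_measure_of_ae_tendsto_indicator (nhds p) (A := ∅) (As := A) (μ := ν)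
      MeasurableSet.empty hA MeasurableSet.univ (measure_ne_top _ _)
      (Filter.Eventually.of_forall fun _ => Set.subset_univ _) (by
        filter_upwards [hae p] with x hx
        filter_upwards [hx] with q hq
        exact ⟨fun h => (hAp q x hq h).elim, fun h => h.elim⟩)
    rw [measure_empty] at this
    have h2 := (ENNReal.tendsto_toReal ENNReal.zero_ne_top).comp this
    exact h2.eventually_lt_const (by simpa using hr)
  obtain ⟨t, -, ht⟩ := hP.elim_nhds_subcover (fun p => {q |
      ν.real (cornerBox q \ cornerBox p) < r ∧ ν.real (cornerBox p \ cornerBox q) < r}) (by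
    intro p _
    refine Filter.Eventually.and ?_ ?_
    · exact hsmall p _ (fun q => (measurableSet_cornerBox q).diff (measurableSet_cornerBox p))
        (fun q x h hx => hx.2 (h.1 hx.1))
    · exact hsmall p _ (fun q => (measurableSet_cornerBox p).diff (measurableSet_cornerBox q))
        (fun q x h hx => hx.2 (h.2 hx.1)))
  refine ⟨t, fun p hp => ?_⟩
  obtain ⟨q, hq, hpq⟩ := Set.mem_iUnion₂.1 (ht hp)
  exact ⟨q, hq, hpq⟩

/-- Integrals of a weakly null sequence over boxes tend to zero uniformly. -/
lemma exists_forall_box_integral_le {ν : Measure (Fin d → ℝ)} [IsFiniteMeasure ν]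
    (hν : ν ≪ volume) {P : Set ((Fin d → ℝ) × (Fin d → ℝ))} (hP : IsCompact P)
    {f : ℕ → (Fin d → ℝ) → ℝ} (hint : ∀ n, Integrable (f n) ν)
    (hweak : ∀ g : (Fin d → ℝ) → ℝ, Measurable g → (∃ M, ∀ x, |g x| ≤ M) →
      Filter.Tendsto (fun n => ∫ x, f n x * g x ∂ν) Filter.atTop (nhds 0))
    {ε : ℝ} (hε : 0 < ε) :
    ∀ᶠ n in Filter.atTop, ∀ p ∈ P, |∫ x in cornerBox p, f n x ∂ν| ≤ ε := by
  obtain ⟨N, r, hr, hN⟩ := exists_forall_setIntegral_le hint hweak (ε := ε / 3) (by positivity)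
  obtain ⟨t, ht⟩ := exists_finite_boxes ν hν hP hr
  have hfin : ∀ᶠ n in Filter.atTop, ∀ q ∈ t, |∫ x in cornerBox q, f n x ∂ν| ≤ ε / 3 := by
    rw [Filter.eventually_all_finset]
    intro q _
    have h := hweak ((cornerBox q).indicator 1)
      (measurable_one.indicator (measurableSet_cornerBox q)) ⟨1, fun x => by
        by_cases hx : x ∈ cornerBox q <;> simp [hx]⟩
    simp only [integral_mul_indicator_one _ (measurableSet_cornerBox q)] at h
    exact h.abs.eventually_le_const (by simpa using hε)
  filter_upwards [hfin, Filter.eventually_ge_atTop N] with n hn hnN p hp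
  obtain ⟨q, hq, h1, h2⟩ := ht p hp
  have mp := measurableSet_cornerBox p
  have mq := measurableSet_cornerBox q
  have k1 := hN _ (mp.diff mq) h1 n hnN
  have k2 := hN _ (mq.diff mp) h2 n hnN
  have k3 := hn q hq
  have e1 := integral_inter_add_sdiff (s := cornerBox p) mq (hint n).integrableOn
  have e2 := integral_inter_add_sdiff (s := cornerBox q) mp (hint n).integrableOn
  rw [Set.inter_comm] at e2
  rw [abs_le] at *
  constructor <;> linarith [k1.1, k1.2, k2.1, k2.2, k3.1, k3.2]

end Boxes

/-! ### The `JF_X` norm -/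

section Main

/-- The corners of a nonempty box lie in every closed set containing the box. -/
lemma corners_mem_of_subset {d : ℕ} {a b : Fin d → ℝ} (hab : ∀ i, a i < b i)
    {K : Set (Fin d → ℝ)} (hK : IsClosed K)
    (h : (Set.pi Set.univ fun i => Set.Ioo (a i) (b i)) ⊆ K) : a ∈ K ∧ b ∈ K := by
  have h1 : (Set.pi Set.univ fun i => Set.Icc (a i) (b i)) ⊆ K := by
    have := hK.closure_subset_iff.2 h
    rw [closure_pi_set] at this
    simpa only [closure_Ioo (hab _).ne] using this
  exact ⟨h1 fun i _ => ⟨le_rfl, (hab i).le⟩, h1 fun i _ => ⟨(hab i).le, le_rfl⟩⟩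

/-- For `d ≥ 1`, `Ω` a bounded open subset of `ℝ^d` and `X` a reflexive
real Banach space with a normalized 1-symmetric basis, if `(f_n)` is weakly null in
`L¹(Ω)` (i.e. `∫_Ω f_n g → 0` for every bounded measurable `g`) then
`‖f_n‖_{JF_X(Ω)} → 0`; hence the formal identity `L¹(Ω) → JF_X(Ω)` is a Dunford–Pettis
operator. -/
theorem JFX_norm_tendsto_zero_of_weakly_null {d : ℕ} (hd : 1 ≤ d)
    (Ω : Set (Fin d → ℝ)) (hΩo : IsOpen Ω) (hΩb : Bornology.IsBounded Ω)
    {X : Type*} [NormedAddCommGroup X] [NormedSpace ℝ X] [CompleteSpace X]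
    (hrefl : Function.Surjective (NormedSpace.inclusionInDoubleDual ℝ X))
    (e : ℕ → X) (he : IsSymmetricBasis e)
    (f : ℕ → (Fin d → ℝ) → ℝ) (hint : ∀ n, IntegrableOn (f n) Ω)
    (hweak : ∀ g : (Fin d → ℝ) → ℝ, Measurable g → (∃ M, ∀ x, |g x| ≤ M) →
      Filter.Tendsto (fun n => ∫ x in Ω, f n x * g x) Filter.atTop (nhds 0)) :
    Filter.Tendsto (fun n => JFNorm e Ω (f n)) Filter.atTop (nhds 0) := by
  obtain ⟨R, hR⟩ := hΩb.subset_closedBall 0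
  have hΩm := hΩo.measurableSet
  have hfin : IsFiniteMeasure (volume.restrict Ω) :=
    ⟨by simpa using hΩb.measure_lt_top⟩
  have hP : IsCompact (Metric.closedBall (0 : Fin d → ℝ) R ×ˢ Metric.closedBall (0 : Fin d → ℝ) R) :=
    (isCompact_closedBall _ _).prod (isCompact_closedBall _ _)
  obtain ⟨N₁, C, hC⟩ := exists_integral_abs_le hint hweak
  have hC0 : 0 ≤ C := (integral_nonneg fun x => abs_nonneg _).trans (hC N₁ le_rfl)
  rw [Metric.tendsto_nhds]
  intro η hη
  obtain ⟨N, hN, hNε⟩ := he.exists_norm_sum_le hrefl (ε := η / (2 * (1 + C))) (by positivity)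
  have hN' : (0 : ℝ) < N := by exact_mod_cast hN
  filter_upwards [exists_forall_box_integral_le Measure.absolutelyContinuous_restrict hP hint hweak
    (ε := 1 / (N : ℝ)) (by positivity), Filter.eventually_ge_atTop N₁] with n hn hnN
  have hle : JFNorm e Ω (f n) ≤ η / 2 := by
    refine Real.sSup_le ?_ (by positivity)
    rintro _ ⟨m, T, hT, hdisj, rfl⟩
    have hTm : ∀ j, MeasurableSet (T j) := by
      intro j
      obtain ⟨a, b, -, h⟩ := (hT j).1
      rw [h]
      exact measurableSet_cornerBox (a, b)
    have hTsmall : ∀ j, |∫ x in T j, f n x| ≤ 1 / N := by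
      intro j
      obtain ⟨⟨a, b, hab, h⟩, hsub⟩ := hT j
      have hc := corners_mem_of_subset hab Metric.isClosed_closedBall (h ▸ hsub.trans hR)
      have := hn (a, b) ⟨hc.1, hc.2⟩
      have hTe : cornerBox (a, b) = T j := h.symm
      rwa [hTe, Measure.restrict_restrict (hTm j), Set.inter_eq_left.2 hsub] at this
    have hTsum : ∑ j, |∫ x in T j, f n x| ≤ C := by
      have hi : IntegrableOn (fun x => |f n x|) Ω := (hint n).abs
      calc _ ≤ ∑ j, ∫ x in T j, |f n x| :=
            Finset.sum_le_sum fun j _ => abs_integral_le_integral_abs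
        _ = ∫ x in ⋃ j, T j, |f n x| := (integral_iUnion_fintype hTm hdisj
            fun j => hi.mono_set (hT j).2).symm
        _ ≤ ∫ x in Ω, |f n x| := setIntegral_mono_set hi
            (Filter.Eventually.of_forall fun x => abs_nonneg _)
            (Set.iUnion_subset fun j => (hT j).2).eventuallyLE
        _ ≤ C := hC n hnN
    set a : ℕ → ℝ := fun j => if h : j < m then ∫ x in T ⟨j, h⟩, f n x else 0 with ha
    have haj : ∀ j : Fin m, a j = ∫ x in T j, f n x := fun j => by simp [ha]
    have hsum : ∑ j : Fin m, (∫ x in T j, f n x) • e (j : ℕ) = ∑ j ∈ Finset.range m, a j • e j := by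
      rw [Finset.sum_range]
      simp only [haj]
    have habs : ∑ j ∈ Finset.range m, |a j| ≤ C := by
      rw [Finset.sum_range]
      simpa only [haj] using hTsum
    rw [hsum]
    refine (he.norm_sum_le_greedy hN hNε a (Finset.range m) (1 / N) (by positivity)
      fun j hj => ?_).trans ?_
    · rw [haj ⟨j, Finset.mem_range.1 hj⟩]
      exact hTsmall _
    · calc _ ≤ η / (2 * (1 + C)) * (N * (1 / N) + C) := by gcongr
        _ = η / 2 := by field_simp
  have hge : 0 ≤ JFNorm e Ω (f n) := by
    refine Real.sSup_nonneg ?_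
    rintro _ ⟨m, T, -, -, rfl⟩
    exact norm_nonneg _
  rw [Real.dist_eq, sub_zero, abs_of_nonneg hge]
  linarith

end Main

end
end
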